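/- arXiv:1403.4685 — 5 statements merged into one kernel-verified Lean document; each statement's English description precedes it below -/
import Mathlib

section
/- Let p be a prime, F a field of characteristic p, and r, s integers with 1 ≤ r ≤ s. Let k_0 < k_1 < ⋯ < k_t be the complete increasing list of all integers k with 0 ≤ k ≤ r such that p does not divide D_k(r,s). Then k_0 = 0, k_t = r, and the Kronecker product J_r ⊗ J_s is similar over F to the block-diagonal matrix consisting, for each 1 ≤ i ≤ t, of exactly k_i − k_{i−1} blocks equal to J_{r+s−k_i−k_{i−1}}; moreover the part sizes r+s−k_i−k_{i−1} are pairwise distinct and strictly decreasing in i. -/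
/-!
Reversing the bases, `J_r ⊗ J_s` is multiplication by `(1 + x) * (1 + y₀)` on
`F[x, y₀] / (x ^ r, y₀ ^ s)`. Putting `y = y₀ * (1 + x)` turns this into `1 + z` with `z = x + y`,
acting on the graded ring `A = F[x, y] / (x ^ r, y ^ s)`, where `z` is homogeneous of degree one.
`D_k(r, s)` is the determinant of `z ^ (r + s - 2 * k) : A_{k-1} → A_{r+s-k-1}`.

Let `a < b` be consecutive indices with `D_a, D_b ≠ 0` in `F`. The main point is that there is
`f ∈ A_a`, `f ∉ z A`, with `z ^ (r + s - a - b) * f = 0` (`exists_generator`). Counting dimensions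
gives `f ≠ 0` in `A_a` killed by `z ^ (r + s - 2 * a - 1)`; and each `k` strictly between `a` and
`b` with `D_k = 0` allows the exponent to be lowered by one, because two syzygies of
`x ^ r, y ^ s, z ^ c` of total degree less than `r + s + c` are proportional.

As `A / z A = F[x] / (x ^ r)`, the elements `x ^ j * f` with `0 ≤ j < b - a`, over all consecutive
pairs, generate `A` over `F[z]`. The strings they generate have lengths at most `r + s - a - b`,
and these bounds add up to `r * s = dim A` by telescoping
`(b - a) * (r + s - a - b) = b * (r + s - b) - a * (r + s - a)`. Hence the strings are independent
and have exactly these lengths.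

Forms of degree `d` are encoded as univariate polynomials of degree at most `d` by setting `x = 1`,
so that `z` becomes `X + 1`.
-/

open Kronecker

/-- The `m × m` Jordan block with eigenvalue `1`: ones on the main diagonal and the
superdiagonal, zeros elsewhere. -/
def jordanBlock (F : Type*) [Zero F] [One F] (m : ℕ) : Matrix (Fin m) (Fin m) F :=
  Matrix.of fun i j => if (j : ℕ) = (i : ℕ) ∨ (j : ℕ) = (i : ℕ) + 1 then 1 else 0

/-- The block-diagonal matrix whose diagonal blocks are the Jordan blocks `J_{d i}`, `i : ι`. -/
def jordanBlockDiag (F : Type*) [Field F] {ι : Type} [DecidableEq ι] (d : ι → ℕ) :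
    Matrix ((i : ι) × Fin (d i)) ((i : ι) × Fin (d i)) F :=
  Matrix.blockDiagonal' fun i => jordanBlock F (d i)

/-- Similarity of square matrices, possibly indexed by different (finite) types:
both matrices represent the same linear endomorphism up to a linear change of basis. -/
def MatSimilar (F : Type*) [Field F] {n m : Type*} [Fintype n] [Fintype m]
    (A : Matrix n n F) (B : Matrix m m F) : Prop :=
  ∃ e : (n → F) ≃ₗ[F] (m → F), ∀ v, e (A.mulVec v) = B.mulVec (e v)

/-- The `k × k` integer matrix whose `(i, j)` entry is the binomial coefficient
`C(r + s - 2k, s + i - j - k)`, where `C(a, b) = 0` if `b < 0` or `b > a`. -/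
def Dmat (r s k : ℕ) : Matrix (Fin k) (Fin k) ℤ :=
  Matrix.of fun i j =>
    if (j : ℕ) + k ≤ s + (i : ℕ) then
      ((r + s - 2 * k).choose (s + (i : ℕ) - (j : ℕ) - k) : ℤ)
    else 0

/-- The determinant `D_k(r, s)`. -/
def Ddet (r s k : ℕ) : ℤ := (Dmat r s k).det

/-! ### Syzygies of `x ^ r`, `y ^ s` and a power of `x + y` -/

section Syzygies

open Polynomial

/-- The form `x ^ n * q (y / x)` of degree `n` lies in the ideal `(x ^ r, y ^ s)`. A form is encoded
by its dehomogenization `q` at `x = 1`, so that `X + 1` encodes `z = x + y`; the inequalities say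
that the monomial `x ^ (n - i) * y ^ i` is not in the ideal, without truncated subtraction. -/
def FormVanishes {R : Type*} [Semiring R] (r s n : ℕ) (q : R[X]) : Prop :=
  ∀ i, n < r + i → i < s → q.coeff i = 0

section Semiring

variable {R : Type*} [Semiring R] {r s n : ℕ} {q : R[X]}

lemma FormVanishes.mono {m : ℕ} (h : FormVanishes r s m q) (hmn : m ≤ n) :
    FormVanishes r s n q :=
  fun i hi => h i (hmn.trans_lt hi)

lemma FormVanishes.mul_X_add_one_pow (h : FormVanishes r s n q) (c : ℕ) :
    FormVanishes r s (n + c) (q * (X + 1) ^ c) := by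
  induction c with
  | zero => simpa using h
  | succ c ih =>
    intro i hni his
    rw [pow_succ, ← mul_assoc, mul_add, mul_one, coeff_add, ih i (by omega) his, add_zero]
    cases i with
    | zero => exact coeff_mul_X_zero _
    | succ i => rw [coeff_mul_X, ih i (by omega) (by omega)]

lemma formVanishes_add_mul_X_pow {U : R[X]} (hU : U.natDegree + r ≤ n) (V : R[X]) :
    FormVanishes r s n (U + V * X ^ s) := by
  intro i hni his
  rw [coeff_add, coeff_mul_X_pow', if_neg his.not_ge, add_zero,
    coeff_eq_zero_of_natDegree_lt (by omega)]

end Semiring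

lemma FormVanishes.exists_eq_add_mul_X_pow {R : Type*} [CommRing R] {r s n : ℕ} {q : R[X]}
    (h : FormVanishes r s n q) (hq : q.natDegree ≤ n) :
    ∃ U V : R[X], U.natDegree ≤ n - r ∧ V.natDegree ≤ n - s ∧ q = U + V * X ^ s := by
  nontriviality R
  have hdecomp : q = q %ₘ X ^ s + q /ₘ X ^ s * X ^ s := by
    rw [mul_comm, modByMonic_add_div]
  refine ⟨q %ₘ X ^ s, q /ₘ X ^ s, natDegree_le_iff_coeff_eq_zero.mpr fun i hi => ?_, ?_, hdecomp⟩
  · by_cases his : i < s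
    · have hcoeff := congrArg (coeff · i) hdecomp
      simp only [coeff_add, coeff_mul_X_pow', if_neg his.not_ge, add_zero] at hcoeff
      rw [← hcoeff, h i (by omega) his]
    · refine coeff_eq_zero_of_degree_lt ((degree_modByMonic_lt q (monic_X_pow s)).trans_le ?_)
      rw [degree_X_pow]
      exact_mod_cast not_lt.mp his
  · rw [natDegree_divByMonic q (monic_X_pow s), natDegree_X_pow]
    exact Nat.sub_le_sub_right hq s

/-- Two syzygies `f * p ^ (e + j) = U' + V' * Q` and `h * p ^ e = U + V * Q` that are proportional
over the fraction field satisfy `h * (U', V') = p ^ j * f * (U, V)`. -/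
lemma pow_dvd_or_dvd_and_dvd {R : Type*} [CommRing R] [IsDomain R] {p : R} (hp : Prime p)
    {f h U V U' V' Q : R} {e j : ℕ} (hf : f * p ^ (e + j) = U' + V' * Q)
    (hh : h * p ^ e = U + V * Q) (hcross : U' * V = U * V') :
    p ^ j ∣ h ∨ p ∣ U' ∧ p ∣ V' := by
  have hpe : p ^ e ≠ 0 := pow_ne_zero e hp.ne_zero
  rw [pow_add] at hf
  have hU : h * U' = p ^ j * (f * U) :=
    mul_left_cancel₀ hpe (by linear_combination U' * hh - U * hf + Q * hcross)
  have hV : h * V' = p ^ j * (f * V) :=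
    mul_left_cancel₀ hpe (by linear_combination V' * hh - V * hf - hcross)
  by_contra! H
  by_cases hpU : p ∣ U'
  · exact H.1 (hp.pow_dvd_of_dvd_mul_right j (H.2 hpU) ⟨_, hV⟩)
  · exact H.1 (hp.pow_dvd_of_dvd_mul_right j hpU ⟨_, hU⟩)

lemma cross_mul_eq_of_dvd {R : Type*} [CommRing R] [IsDomain R] {p U V U' V' Q : R[X]}
    (h : p ∣ U + V * Q) (h' : p ∣ U' + V' * Q) (hlt : (U' * V).natDegree < p.natDegree)
    (hlt' : (U * V').natDegree < p.natDegree) : U' * V = U * V' := by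
  rw [← sub_eq_zero]
  refine eq_zero_of_dvd_of_natDegree_lt (p := p) ?_
    ((natDegree_sub_le _ _).trans_lt (max_lt hlt hlt'))
  convert (h'.mul_left V).sub (h.mul_left V') using 1
  ring

lemma natDegree_X_add_one_pow {R : Type*} [Semiring R] [Nontrivial R] (n : ℕ) :
    ((X + 1 : R[X]) ^ n).natDegree = n := by
  rw [← C_1, natDegree_pow_X_add_C]

lemma monic_X_add_one {R : Type*} [Semiring R] : (X + 1 : R[X]).Monic := monic_X_add_C 1

lemma prime_X_add_one {R : Type*} [CommRing R] [IsDomain R] : Prime (X + 1 : R[X]) := by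
  simpa using prime_X_sub_C (-1 : R)

lemma X_add_one_dvd_iff {R : Type*} [CommRing R] {f : R[X]} : X + 1 ∣ f ↔ f.eval (-1) = 0 := by
  simpa using dvd_iff_isRoot (p := f) (a := -1)

lemma natDegree_X_add_one_pow_mul {R : Type*} [Semiring R] {q : R[X]} (hq : q ≠ 0) (n : ℕ) :
    ((X + 1) ^ n * q).natDegree = n + q.natDegree := by
  have := Polynomial.nontrivial_iff.mp ⟨q, 0, hq⟩
  rw [(monic_X_add_one.pow n).natDegree_mul' hq, natDegree_X_add_one_pow]

lemma natDegree_le_of_X_add_one_mul {R : Type*} [Semiring R] {q : R[X]} {n : ℕ}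
    (h : ((X + 1) * q).natDegree ≤ n) : q.natDegree ≤ n - 1 := by
  rcases eq_or_ne q 0 with rfl | hq
  · simp
  · rw [← pow_one (X + 1), natDegree_X_add_one_pow_mul hq] at h
    omega

lemma natDegree_mul_X_add_one_pow_le {R : Type*} [Semiring R] (f : R[X]) (c : ℕ) :
    (f * (X + 1) ^ c).natDegree ≤ f.natDegree + c := by
  nontriviality R
  exact natDegree_mul_le.trans_eq (by rw [natDegree_X_add_one_pow])

end Syzygies

/-! ### The determinants `D_k(r, s)` -/

section Determinant

open Polynomial

lemma Ddet_zero (r s : ℕ) : Ddet r s 0 = 1 := Matrix.det_isEmpty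

lemma Ddet_self {r s : ℕ} (hrs : r ≤ s) : Ddet r s r = 1 := by
  rw [Ddet, Matrix.det_of_isUpperTriangular]
  · refine Finset.prod_eq_one fun i _ => ?_
    rw [Dmat, Matrix.of_apply, if_pos (by omega), show r + s - 2 * r = s - r by omega,
      show s + (i : ℕ) - i - r = s - r by omega, Nat.choose_self, Nat.cast_one]
  · intro i j (hij : (j : ℕ) < i)
    rw [Dmat, Matrix.of_apply, if_pos (by omega), Nat.choose_eq_zero_of_lt (by omega),
      Nat.cast_zero]

variable {R : Type*} [CommRing R] {r s : ℕ}

/-- The matrix of `D_k(r, s)` represents multiplication by `z ^ (r + s - 2 * k)` from degree `k - 1`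
to degree `r + s - k - 1` of `F[x, y] / (x ^ r, y ^ s)`. -/
lemma Dmat_mulVec_coeff {k : ℕ} (hks : k ≤ s) {h : R[X]} (hdeg : h.natDegree < k) (i : Fin k) :
    ((Dmat r s k).map (Int.castRingHom R)).mulVec (fun j => h.coeff j) i =
      (h * (X + 1) ^ (r + s - 2 * k)).coeff (s - k + i) := by
  have hsum : ∑ j : Fin k, C (h.coeff j) * X ^ (j : ℕ) = h := by
    rw [Fin.sum_univ_eq_sum_range fun j => C (h.coeff j) * X ^ j]
    exact (as_sum_range_C_mul_X_pow' h hdeg).symm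
  conv_rhs => rw [← hsum, Finset.sum_mul, finsetSum_coeff]
  rw [Matrix.mulVec, dotProduct]
  refine Finset.sum_congr rfl fun j _ => ?_
  rw [mul_assoc, coeff_C_mul, coeff_X_pow_mul', coeff_X_add_one_pow, mul_comm, Matrix.map_apply,
    Dmat, Matrix.of_apply]
  by_cases hj : (j : ℕ) + k ≤ s + i
  · rw [if_pos hj, if_pos (by omega), show s + (i : ℕ) - j - k = s - k + i - j by omega]
    simp
  · rw [if_neg hj, if_neg (by omega), map_zero]

lemma Ddet_cast_eq_zero_iff [IsDomain R] {k : ℕ} (hkr : k ≤ r) (hrs : r ≤ s) :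
    (Ddet r s k : R) = 0 ↔ ∃ h : R[X], h ≠ 0 ∧ h.natDegree < k ∧
      FormVanishes r s (r + s - (k + 1)) (h * (X + 1) ^ (r + s - 2 * k)) := by
  have hdet : (Ddet r s k : R) = ((Dmat r s k).map (Int.castRingHom R)).det :=
    (Int.castRingHom R).map_det (Dmat r s k)
  rw [hdet, ← Matrix.exists_mulVec_eq_zero_iff]
  constructor
  · rintro ⟨v, hv0, hv⟩
    obtain ⟨⟨h, hmem⟩, rfl⟩ := (degreeLTEquiv R k).surjective v
    have h0 : h ≠ 0 := by
      rintro rfl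
      exact hv0 (map_zero (degreeLTEquiv R k))
    have hdeg : h.natDegree < k := (natDegree_lt_iff_degree_lt h0).mpr (mem_degreeLT.mp hmem)
    refine ⟨h, h0, hdeg, fun i hi his => ?_⟩
    have hentry := congrFun hv ⟨i - (s - k), by omega⟩
    rw [← show s - k + (i - (s - k)) = i by omega]
    exact (Dmat_mulVec_coeff (hkr.trans hrs) hdeg _).symm.trans hentry
  · rintro ⟨h, h0, hdeg, hvan⟩
    refine ⟨fun j => h.coeff j, fun hv => h0 ?_, ?_⟩
    · exact leadingCoeff_eq_zero.mp (congrFun hv ⟨h.natDegree, hdeg⟩)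
    · funext i
      rw [Dmat_mulVec_coeff (hkr.trans hrs) hdeg, hvan _ (by omega) (by omega), Pi.zero_apply]

lemma eq_zero_of_X_add_one_pow_dvd [IsDomain R] {a c j : ℕ} (har : a ≤ r) (hrs : r ≤ s)
    (hDa : (Ddet r s a : R) ≠ 0) {h : R[X]} (hdeg : h.natDegree < a + j)
    (hdvd : (X + 1) ^ j ∣ h) (hc : c + j ≤ r + s - 2 * a)
    (hvan : FormVanishes r s (a + j - 1 + c) (h * (X + 1) ^ c)) : h = 0 := by
  obtain ⟨g, rfl⟩ := hdvd
  by_contra h0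
  have hg : g ≠ 0 := right_ne_zero_of_mul h0
  rw [natDegree_X_add_one_pow_mul hg] at hdeg
  refine hDa ((Ddet_cast_eq_zero_iff har hrs).mpr ⟨g, hg, by omega, ?_⟩)
  convert hvan.mul_X_add_one_pow (r + s - 2 * a - (c + j)) using 1
  · omega
  · rw [mul_comm _ g, mul_assoc, mul_assoc, ← pow_add, ← pow_add]
    congr 2
    omega

end Determinant

/-! ### A generator for each gap in the list of indices -/

section Generator

open Polynomial

variable {F : Type*} [Field F] {r s a : ℕ}

/-- There are `a + 1` coefficients in a form of degree `a`, and only `a` of them in its product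
with `z ^ (r + s - 2 * a - 1)` survive modulo `(x ^ r, y ^ s)`. -/
lemma exists_ne_zero_formVanishes (har : a < r) (hrs : r ≤ s) :
    ∃ f : F[X], f ≠ 0 ∧ f.natDegree ≤ a ∧
      FormVanishes r s (r + s - (a + 1)) (f * (X + 1) ^ (r + s - (a + 1) - a)) := by
  let window : degreeLT F (a + 1) →ₗ[F] (Fin a → F) :=
    LinearMap.pi fun i => lcoeff F (s - a + i) ∘ₗ
      LinearMap.mulRight F ((X + 1 : F[X]) ^ (r + s - (a + 1) - a)) ∘ₗ (degreeLT F (a + 1)).subtype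
  have : Module.Finite F (degreeLT F (a + 1)) := .equiv (degreeLTEquiv F (a + 1)).symm
  have hker : LinearMap.ker window ≠ ⊥ :=
    LinearMap.ker_ne_bot_of_finrank_lt (by simp [(degreeLTEquiv F (a + 1)).finrank_eq])
  obtain ⟨f, hf, hf0⟩ := Submodule.exists_mem_ne_zero_of_ne_bot hker
  have hf0 : (f : F[X]) ≠ 0 := by simpa using hf0
  refine ⟨f, hf0, Nat.lt_succ_iff.mp ((natDegree_lt_iff_degree_lt hf0).mpr (mem_degreeLT.mp f.2)),
    fun i hi his => ?_⟩
  have hcoeff := congrFun (LinearMap.mem_ker.mp hf) ⟨i - (s - a), by omega⟩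
  simpa [window, show s - a + (i - (s - a)) = i by omega] using hcoeff

/-- As `D_b = 0`, some nonzero form `h` of degree `b - 1` is annihilated by `z ^ (r + s - 2 * b)`.
The two syzygies of `x ^ r, y ^ s, z ^ (r + s - 2 * b)` coming from `f` and `h` have total degree
too small to be independent. Hence they are proportional, and either the one of `f` can be divided
by `z`, or `h` is divisible by `z ^ (b - a)`, which contradicts `D_a ≠ 0`. -/
lemma formVanishes_succ_of_Ddet_eq_zero {b : ℕ} (hab : a < b) (hbr : b < r) (hrs : r ≤ s)
    (hDa : (Ddet r s a : F) ≠ 0) (hDb : (Ddet r s b : F) = 0) {f : F[X]} (hfa : f.natDegree ≤ a)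
    (hf : FormVanishes r s (r + s - b) (f * (X + 1) ^ (r + s - b - a))) :
    FormVanishes r s (r + s - (b + 1)) (f * (X + 1) ^ (r + s - (b + 1) - a)) := by
  obtain ⟨h, h0, hdeg, hh⟩ := (Ddet_cast_eq_zero_iff hbr.le hrs).mp hDb
  obtain ⟨U', V', hU', hV', hfUV⟩ := hf.exists_eq_add_mul_X_pow
    ((natDegree_mul_X_add_one_pow_le _ _).trans (by omega))
  obtain ⟨U, V, hU, hV, hhUV⟩ := hh.exists_eq_add_mul_X_pow
    ((natDegree_mul_X_add_one_pow_le _ _).trans (by omega))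
  rw [show r + s - b - a = r + s - 2 * b + (b - a) by omega] at hfUV
  have hcross : U' * V = U * V' := by
    refine cross_mul_eq_of_dvd (p := (X + 1) ^ (r + s - 2 * b)) (hhUV ▸ Dvd.intro_left _ rfl)
      (hfUV ▸ (Dvd.intro _ (pow_add _ _ _).symm).mul_left f) ?_ ?_ <;>
    · rw [natDegree_X_add_one_pow]
      exact natDegree_mul_le.trans_lt (by omega)
  rcases pow_dvd_or_dvd_and_dvd prime_X_add_one hfUV hhUV hcross with hdvd | ⟨⟨U₁, rfl⟩, ⟨V₁, rfl⟩⟩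
  · refine absurd (eq_zero_of_X_add_one_pow_dvd (hab.trans hbr).le hrs hDa (by omega) hdvd
      (c := r + s - 2 * b) (by omega) ?_) h0
    rwa [show a + (b - a) - 1 + (r + s - 2 * b) = r + s - (b + 1) by omega]
  · have hquot : f * (X + 1) ^ (r + s - (b + 1) - a) = U₁ + V₁ * X ^ s := by
      refine mul_left_cancel₀ (monic_X_add_one (R := F)).ne_zero ?_
      rw [mul_left_comm, ← pow_succ',
        show r + s - (b + 1) - a + 1 = r + s - 2 * b + (b - a) by omega, hfUV]
      ring
    rw [hquot]
    have hU₁ := natDegree_le_of_X_add_one_mul hU'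
    exact formVanishes_add_mul_X_pow (by omega) V₁

lemma exists_generator {b : ℕ} (hab : a < b) (hbr : b ≤ r) (hrs : r ≤ s)
    (hDa : (Ddet r s a : F) ≠ 0) (hD : ∀ k, a < k → k < b → (Ddet r s k : F) = 0) :
    ∃ f : F[X], f.natDegree ≤ a ∧ f.eval (-1) ≠ 0 ∧
      FormVanishes r s (r + s - b) (f * (X + 1) ^ (r + s - b - a)) := by
  obtain ⟨f, hf0, hfa, hf⟩ := exists_ne_zero_formVanishes (F := F) (hab.trans_le hbr) hrs
  have hfb : FormVanishes r s (r + s - b) (f * (X + 1) ^ (r + s - b - a)) := by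
    induction b, hab using Nat.le_induction with
    | base => exact hf
    | succ b hab ih =>
      exact formVanishes_succ_of_Ddet_eq_zero hab hbr hrs hDa (hD b hab b.lt_succ_self) hfa
        (ih (by omega) fun k hak hkb => hD k hak (hkb.trans b.lt_succ_self))
  refine ⟨f, hfa, fun heval => hf0 ?_, hfb⟩
  refine eq_zero_of_X_add_one_pow_dvd (j := 1) (c := r + s - b - a) (hab.le.trans hbr) hrs hDa
    (Nat.lt_succ_of_le hfa) (by rwa [pow_one, X_add_one_dvd_iff]) (by omega) ?_
  rwa [show a + 1 - 1 + (r + s - b - a) = r + s - b by omega]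

end Generator

/-! ### Graded generation -/

section FormEval

open Polynomial Finset

section Semiring

variable {R V : Type*} [Semiring R] [AddCommMonoid V] [Module R V] {w : ℕ → ℕ → V}
  {Z : Module.End R V}

/-- The homogenization `x ^ d * f (y / x)` of a polynomial `f` of degree at most `d`, evaluated in
`V`, where `w i j` is the vector that stands for the monomial `x ^ i * y ^ j`. -/
noncomputable def formEval (w : ℕ → ℕ → V) (d : ℕ) : R[X] →ₗ[R] V :=
  ∑ i ∈ range (d + 1), (lcoeff R i).smulRight (w (d - i) i)

lemma formEval_apply (d : ℕ) (f : R[X]) :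
    formEval w d f = ∑ i ∈ range (d + 1), f.coeff i • w (d - i) i := by
  simp [formEval]

lemma formEval_X_pow (i j : ℕ) : formEval w (i + j) (X ^ j : R[X]) = w i j := by
  simp [formEval_apply, coeff_X_pow]

lemma formEval_eq_zero {r s d : ℕ} (hw : ∀ i j, r ≤ i ∨ s ≤ j → w i j = 0) {f : R[X]}
    (hf : FormVanishes r s d f) : formEval w d f = 0 := by
  rw [formEval_apply]
  refine sum_eq_zero fun i hi => ?_
  rw [mem_range] at hi
  by_cases hwindow : d < r + i ∧ i < s
  · rw [hf i hwindow.1 hwindow.2, zero_smul]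
  · rw [hw _ _ (by omega), smul_zero]

lemma apply_formEval (hZ : ∀ i j, Z (w i j) = w (i + 1) j + w i (j + 1)) {d : ℕ} {f : R[X]}
    (hf : f.natDegree ≤ d) : Z (formEval w d f) = formEval w (d + 1) (f * (X + 1)) := by
  have hX : formEval w (d + 1) (f * X) = ∑ i ∈ range (d + 1), f.coeff i • w (d - i) (i + 1) := by
    simp [formEval_apply, sum_range_succ' _ (d + 1)]
  have hone : formEval w (d + 1) f = ∑ i ∈ range (d + 1), f.coeff i • w (d - i + 1) i := by
    rw [formEval_apply, sum_range_succ, coeff_eq_zero_of_natDegree_lt (Nat.lt_succ_of_le hf),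
      zero_smul, add_zero]
    refine sum_congr rfl fun i hi => ?_
    rw [Nat.sub_add_comm (Nat.lt_succ_iff.mp (mem_range.mp hi))]
  rw [mul_add, mul_one, map_add, hX, hone, formEval_apply, map_sum, ← sum_add_distrib]
  refine sum_congr rfl fun i _ => ?_
  rw [map_smul, hZ, smul_add, add_comm]

lemma pow_apply_formEval (hZ : ∀ i j, Z (w i j) = w (i + 1) j + w i (j + 1)) {d : ℕ} {f : R[X]}
    (hf : f.natDegree ≤ d) (c : ℕ) :
    (Z ^ c) (formEval w d f) = formEval w (d + c) (f * (X + 1) ^ c) := by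
  induction c with
  | zero => simp
  | succ c ih =>
    rw [pow_succ', Module.End.mul_apply, ih, apply_formEval hZ, pow_succ, mul_assoc, add_assoc]
    exact (natDegree_mul_X_add_one_pow_le f c).trans (Nat.add_le_add_right hf c)

end Semiring

/-- A graded form of Nakayama's lemma: modulo `z`, the forms of each degree make up a line, spanned
by any form that is not divisible by `z`. -/
lemma formEval_mem_of_generators {F V : Type*} [Field F] [AddCommGroup V] [Module F V]
    {w : ℕ → ℕ → V} {Z : Module.End F V} (hZ : ∀ i j, Z (w i j) = w (i + 1) j + w i (j + 1))
    {R : Submodule F V} (hR : ∀ v ∈ R, Z v ∈ R)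
    (hgen : ∀ n, ∃ f : F[X], f.natDegree ≤ n ∧ f.eval (-1) ≠ 0 ∧ formEval w n f ∈ R)
    {n : ℕ} {f : F[X]} (hf : f.natDegree ≤ n) : formEval w n f ∈ R := by
  induction n generalizing f with
  | zero =>
    obtain ⟨g, hg, hg1, hgR⟩ := hgen 0
    rw [eq_C_of_natDegree_le_zero hg, eval_C] at hg1
    rw [eq_C_of_natDegree_le_zero hg] at hgR
    rw [eq_C_of_natDegree_le_zero hf, ← div_mul_cancel₀ (f.coeff 0) hg1, C_mul, ← smul_eq_C_mul,
      map_smul]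
    exact R.smul_mem _ hgR
  | succ n ih =>
    obtain ⟨g, hg, hg1, hgR⟩ := hgen (n + 1)
    obtain ⟨q, hq⟩ : X + 1 ∣ f - C (f.eval (-1) / g.eval (-1)) * g := by
      rw [X_add_one_dvd_iff, eval_sub, eval_C_mul, div_mul_cancel₀ _ hg1, sub_self]
    have hqn : q.natDegree ≤ n := by
      refine natDegree_le_of_X_add_one_mul (n := n + 1) ?_
      rw [← hq]
      exact (natDegree_sub_le_of_le hf ((natDegree_C_mul_le _ g).trans hg)).trans_eq (max_self _)
    rw [eq_add_of_sub_eq' hq, map_add, ← smul_eq_C_mul, map_smul, mul_comm,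
      ← apply_formEval hZ hqn]
    exact R.add_mem (R.smul_mem _ hgR) (hR _ (ih hqn))

end FormEval

/-! ### Jordan strings -/

section JordanBlock

variable {R : Type*} [CommRing R]

/-- The standard basis vector with index `m - 1 - i`, or `0` if `m ≤ i`. In the reversed order `J_m`
acts as multiplication by `1 + x` on the powers of `x` in `R[x] / (x ^ m)`. -/
def revBasis (R : Type*) [CommRing R] (m i : ℕ) : Fin m → R :=
  fun a => if (a : ℕ) + i + 1 = m then 1 else 0

lemma revBasis_rev {m : ℕ} (a : Fin m) : revBasis R m a.rev = Pi.single a 1 := by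
  funext b
  simp only [revBasis, Pi.single_apply, Fin.val_rev, Fin.ext_iff]
  exact if_congr (by omega) rfl rfl

lemma revBasis_of_le {m i : ℕ} (h : m ≤ i) : revBasis R m i = 0 :=
  funext fun a => if_neg (by omega)

lemma span_range_revBasis (m : ℕ) : Submodule.span R (Set.range (revBasis R m)) = ⊤ := by
  rw [eq_top_iff, ← (Pi.basisFun R (Fin m)).span_eq, Submodule.span_le]
  rintro _ ⟨a, rfl⟩
  rw [Pi.basisFun_apply, ← revBasis_rev]
  exact Submodule.subset_span (Set.mem_range_self _)

lemma jordanBlock_mulVec_revBasis (m i : ℕ) :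
    (jordanBlock R m).mulVec (revBasis R m i) = revBasis R m i + revBasis R m (i + 1) := by
  rcases le_or_gt m i with hi | hi
  · rw [revBasis_of_le hi, revBasis_of_le (hi.trans i.le_succ), Matrix.mulVec_zero, add_zero]
  · have hrev : ((⟨i, hi⟩ : Fin m).rev.rev : ℕ) = i := by rw [Fin.rev_rev]
    funext a
    rw [← hrev, revBasis_rev, Matrix.mulVec_single_one]
    simp only [← revBasis_rev, jordanBlock, revBasis, Matrix.col_apply, Matrix.of_apply,
      Pi.add_apply, Fin.val_rev]
    split_ifs <;> first | omega | simp

lemma det_jordanBlock (m : ℕ) : (jordanBlock R m).det = 1 := by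
  rw [Matrix.det_of_isUpperTriangular]
  · simp [jordanBlock]
  · intro i j (hij : j < i)
    rw [jordanBlock, Matrix.of_apply, if_neg (by omega)]

lemma blockDiagonal'_mulVec {ι : Type*} [Fintype ι] [DecidableEq ι] {n : ι → Type*}
    [∀ i, Fintype (n i)] (M : ∀ i, Matrix (n i) (n i) R) (v : (Σ i, n i) → R) (i : ι) (a : n i) :
    (Matrix.blockDiagonal' M).mulVec v ⟨i, a⟩ = (M i).mulVec (fun b => v ⟨i, b⟩) a := by
  simp only [Matrix.mulVec, dotProduct, Fintype.sum_sigma]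
  rw [Finset.sum_eq_single i (fun j _ hj => ?_) (by simp)]
  · simp only [Matrix.blockDiagonal'_apply_eq]
  · simp [Matrix.blockDiagonal'_apply_ne _ _ _ hj.symm]

end JordanBlock

section StringMap

variable {R V : Type*} [CommRing R] [AddCommGroup V] [Module R V] {Z : Module.End R V}

/-- The linear map with `revBasis R m i ↦ Z ^ i q` for `i < m`, which parametrizes the Jordan string
of length `m` through `q`. -/
def stringMap (Z : Module.End R V) (m : ℕ) (q : V) : (Fin m → R) →ₗ[R] V :=
  Fintype.linearCombination R fun a : Fin m => (Z ^ (a.rev : ℕ)) q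

lemma stringMap_revBasis {m : ℕ} {q : V} (hq : (Z ^ m) q = 0) (i : ℕ) :
    stringMap Z m q (revBasis R m i) = (Z ^ i) q := by
  rcases le_or_gt m i with hi | hi
  · rw [revBasis_of_le hi, map_zero, Module.End.pow_map_zero_of_le hi hq]
  · have hrev : ((⟨i, hi⟩ : Fin m).rev.rev : ℕ) = i := by rw [Fin.rev_rev]
    rw [← hrev, revBasis_rev, stringMap, Fintype.linearCombination_apply_single, one_smul]

lemma stringMap_jordanBlock_mulVec {m : ℕ} {q : V} (hq : (Z ^ m) q = 0) (v : Fin m → R) :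
    stringMap Z m q ((jordanBlock R m).mulVec v) = stringMap Z m q v + Z (stringMap Z m q v) := by
  have hext : stringMap Z m q ∘ₗ (jordanBlock R m).mulVecLin = (1 + Z) ∘ₗ stringMap Z m q := by
    refine LinearMap.ext_on_range (span_range_revBasis m) fun i => ?_
    simp [jordanBlock_mulVec_revBasis, stringMap_revBasis hq, pow_succ']
  exact LinearMap.congr_fun hext v

end StringMap

lemma exists_equiv_jordanBlockDiag {F V : Type*} [Field F] [AddCommGroup V] [Module F V]
    [FiniteDimensional F V] {Z : Module.End F V} {ι : Type} [Fintype ι] [DecidableEq ι]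
    {d : ι → ℕ} {q : ι → V} (hq : ∀ x, (Z ^ d x) (q x) = 0)
    (hgen : ∀ R : Submodule F V, (∀ v ∈ R, Z v ∈ R) → (∀ x, q x ∈ R) → R = ⊤)
    (hdim : Module.finrank F V = ∑ x, d x) :
    ∃ e : V ≃ₗ[F] ((x : ι) × Fin (d x) → F),
      ∀ v, e (v + Z v) = (jordanBlockDiag F d).mulVec (e v) := by
  let g := ∑ x, stringMap Z (d x) (q x) ∘ₗ
    LinearMap.funLeft F F fun a => (⟨x, a⟩ : (x : ι) × Fin (d x))
  have hg (v : (x : ι) × Fin (d x) → F) : g v = ∑ x, stringMap Z (d x) (q x) fun a => v ⟨x, a⟩ := by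
    simp [g, LinearMap.funLeft, Function.comp_def]
  have hgJ (v) : g ((jordanBlockDiag F d).mulVec v) = g v + Z (g v) := by
    simp only [hg, jordanBlockDiag, blockDiagonal'_mulVec, stringMap_jordanBlock_mulVec (hq _),
      Finset.sum_add_distrib, map_sum]
  have hsurj : Function.Surjective g := by
    refine LinearMap.range_eq_top.mp (hgen _ ?_ fun x => ?_)
    · rintro _ ⟨v, rfl⟩
      rw [← add_sub_cancel_left (g v) (Z (g v)), ← hgJ, ← map_sub]
      exact LinearMap.mem_range_self g _
    · refine ⟨fun y => if y.1 = x then revBasis F (d y.1) 0 y.2 else 0, ?_⟩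
      rw [hg, Finset.sum_eq_single x (fun y _ hyx => ?_) (by simp)]
      · simpa using stringMap_revBasis (hq x) 0
      · simp only [if_neg hyx]
        exact map_zero _
  have hinj : Function.Injective g :=
    (LinearMap.injective_iff_surjective_of_finrank_eq_finrank (by simp [hdim])).mpr hsurj
  let e := LinearEquiv.ofBijective g ⟨hinj, hsurj⟩
  refine ⟨e.symm, fun v => e.symm_apply_eq.mpr ?_⟩
  have heJ : e ((jordanBlockDiag F d).mulVec (e.symm v)) = e (e.symm v) + Z (e (e.symm v)) := hgJ _
  rw [heJ, e.apply_symm_apply]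

/-! ### The Kronecker product as a truncated polynomial ring -/

section Kronecker

open Matrix Polynomial

variable {R : Type*} [CommRing R]

/-- The pure tensor `v ⊗ u` as a vector indexed by pairs, and bilinear in `v` and `u`. -/
def pureTensor (R : Type*) [CommRing R] (m n : Type*) :
    (m → R) →ₗ[R] (n → R) →ₗ[R] (m × n → R) :=
  LinearMap.mk₂ R (fun v u x => v x.1 * u x.2) (fun _ _ _ => funext fun _ => add_mul _ _ _)
    (fun _ _ _ => funext fun _ => mul_assoc _ _ _) (fun _ _ _ => funext fun _ => mul_add _ _ _)
    (fun _ _ _ => funext fun _ => mul_left_comm _ _ _)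

lemma kronecker_mulVec_pureTensor {m n : Type*} [Fintype m] [Fintype n] (A : Matrix m m R)
    (B : Matrix n n R) (v : m → R) (u : n → R) :
    (A ⊗ₖ B) *ᵥ pureTensor R m n v u = pureTensor R m n (A *ᵥ v) (B *ᵥ u) := by
  funext x
  simp only [mulVec, dotProduct, pureTensor, LinearMap.mk₂_apply, kroneckerMap_apply,
    Fintype.sum_prod_type, Finset.sum_mul_sum]
  exact Finset.sum_congr rfl fun _ _ => Finset.sum_congr rfl fun _ _ => mul_mul_mul_comm _ _ _ _

lemma eq_top_of_pureTensor_mem {m n : Type*} [Finite m] [Finite n] {N : Submodule R (m × n → R)}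
    (h : ∀ v u, pureTensor R m n v u ∈ N) : N = ⊤ := by
  classical
  rw [eq_top_iff, ← (Pi.basisFun R (m × n)).span_eq, Submodule.span_le]
  rintro _ ⟨⟨a, b⟩, rfl⟩
  convert! h (Pi.single a 1) (Pi.single b 1)
  funext ⟨a', b'⟩
  simp [pureTensor, Pi.single_apply, ← ite_and, and_comm]

/-- The vector of the monomial `x ^ i * y ^ j`, where `x` acts as `(J_r - 1) ⊗ 1` and `y` as
`J_r ⊗ (J_s - 1)`, so that `J_r ⊗ J_s = 1 + x + y`. -/
def tensorMonomial (R : Type*) [CommRing R] (r s i j : ℕ) : Fin r × Fin s → R :=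
  pureTensor R (Fin r) (Fin s) ((jordanBlock R r ^ j) *ᵥ revBasis R r i) (revBasis R s j)

lemma tensorMonomial_eq_zero {r s i j : ℕ} (h : r ≤ i ∨ s ≤ j) : tensorMonomial R r s i j = 0 := by
  rcases h with h | h <;> simp [tensorMonomial, revBasis_of_le h]

lemma kronecker_mulVec_tensorMonomial (r s i j : ℕ) :
    (jordanBlock R r ⊗ₖ jordanBlock R s) *ᵥ tensorMonomial R r s i j =
      tensorMonomial R r s i j +
        (tensorMonomial R r s (i + 1) j + tensorMonomial R r s i (j + 1)) := by
  have hJ : jordanBlock R r *ᵥ (jordanBlock R r ^ j *ᵥ revBasis R r i) =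
      jordanBlock R r ^ j *ᵥ revBasis R r i + jordanBlock R r ^ j *ᵥ revBasis R r (i + 1) := by
    rw [mulVec_mulVec, ← pow_succ', pow_succ, ← mulVec_mulVec, jordanBlock_mulVec_revBasis,
      mulVec_add]
  simp only [tensorMonomial, kronecker_mulVec_pureTensor, jordanBlock_mulVec_revBasis, map_add]
  rw [pow_succ', ← mulVec_mulVec, hJ, map_add, LinearMap.add_apply, add_assoc]

lemma eq_top_of_tensorMonomial_mem {r s : ℕ} {N : Submodule R (Fin r × Fin s → R)}
    (h : ∀ i j, tensorMonomial R r s i j ∈ N) : N = ⊤ := by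
  have hleft (j : ℕ) (v : Fin r → R) : pureTensor R _ _ v (revBasis R s j) ∈ N := by
    have hunit : IsUnit (jordanBlock R r ^ j) := by
      rw [isUnit_iff_isUnit_det, det_pow, det_jordanBlock, one_pow]
      exact isUnit_one
    obtain ⟨v, rfl⟩ := mulVec_surjective_iff_isUnit.mpr hunit v
    have hspan : Submodule.span R (Set.range (revBasis R r)) ≤
        N.comap ((pureTensor R _ _).flip (revBasis R s j) ∘ₗ (jordanBlock R r ^ j).mulVecLin) :=
      Submodule.span_le.mpr (Set.range_subset_iff.mpr fun i => h i j)
    exact hspan (span_range_revBasis (R := R) r ▸ Submodule.mem_top)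
  refine eq_top_of_pureTensor_mem fun v u => ?_
  have hspan : Submodule.span R (Set.range (revBasis R s)) ≤ N.comap (pureTensor R _ _ v) :=
    Submodule.span_le.mpr (Set.range_subset_iff.mpr fun j => hleft j v)
  exact hspan (span_range_revBasis (R := R) s ▸ Submodule.mem_top)

lemma eq_top_of_formEval_generators {F : Type*} [Field F] {r s : ℕ}
    {Z : Module.End F (Fin r × Fin s → F)}
    (hZ : ∀ i j, Z (tensorMonomial F r s i j) =
      tensorMonomial F r s (i + 1) j + tensorMonomial F r s i (j + 1))
    {R : Submodule F (Fin r × Fin s → F)} (hR : ∀ v ∈ R, Z v ∈ R)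
    (hgen : ∀ n < r, ∃ f : F[X], f.natDegree ≤ n ∧ f.eval (-1) ≠ 0 ∧
      formEval (tensorMonomial F r s) n f ∈ R) : R = ⊤ := by
  refine eq_top_of_tensorMonomial_mem fun i j => ?_
  rw [← formEval_X_pow (R := F) (w := tensorMonomial F r s)]
  refine formEval_mem_of_generators hZ hR (fun n => ?_) ((natDegree_X_pow j).trans_le (by omega))
  rcases lt_or_ge n r with hn | hn
  · exact hgen n hn
  · have hone : FormVanishes r s n (1 : F[X]) := fun i hi _ =>
      coeff_eq_zero_of_natDegree_lt (by rw [natDegree_one]; omega)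
    refine ⟨1, by simp, by simp, ?_⟩
    rw [formEval_eq_zero (fun _ _ => tensorMonomial_eq_zero) hone]
    exact R.zero_mem

end Kronecker

/-! ### The decomposition -/

section Decomposition

open Polynomial

lemma exists_castSucc_le_lt_succ {α : Type*} [LinearOrder α] {t : ℕ} {k : Fin (t + 1) → α} {n : α}
    (h0 : k 0 ≤ n) (h1 : n < k (Fin.last t)) :
    ∃ i : Fin t, k i.castSucc ≤ n ∧ n < k i.succ := by
  by_contra! hstep
  exact h1.not_ge (Fin.induction h0 hstep (Fin.last t))

lemma ne_of_castSucc_lt_of_lt_succ {α : Type*} [Preorder α] {t : ℕ} {k : Fin (t + 1) → α}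
    (hmono : StrictMono k) {i : Fin t} {n : α} (hlt : k i.castSucc < n) (hgt : n < k i.succ)
    (j : Fin (t + 1)) : k j ≠ n := by
  rintro rfl
  exact (Fin.castSucc_lt_iff_succ_le.mp (hmono.lt_iff_lt.mp hlt)).not_gt (hmono.lt_iff_lt.mp hgt)

lemma sum_gap_mul_length {t r s : ℕ} {k : Fin (t + 1) → ℕ} (hmono : Monotone k) (hk0 : k 0 = 0)
    (hkt : k (Fin.last t) = r) (hrs : r ≤ s) :
    ∑ i : Fin t, (k i.succ - k i.castSucc) * (r + s - k i.succ - k i.castSucc) = r * s := by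
  let g (i : Fin (t + 1)) : ℤ := k i * (r + s - k i)
  have hterm (i : Fin t) : (((k i.succ - k i.castSucc) *
      (r + s - k i.succ - k i.castSucc) : ℕ) : ℤ) = g i.succ - g i.castSucc := by
    have hle : k i.castSucc ≤ k i.succ := hmono i.castSucc_le_succ
    have hlast : k i.succ ≤ k (Fin.last t) := hmono (Fin.le_last _)
    rw [Nat.cast_mul, Nat.cast_sub hle, Nat.cast_sub (by omega), Nat.cast_sub (by omega)]
    push_cast
    ring
  have htelescope : ∑ i : Fin t, (g i.succ - g i.castSucc) = g (Fin.last t) - g 0 := by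
    rw [Finset.sum_sub_distrib, sub_eq_sub_iff_add_eq_add, add_comm, ← Fin.sum_univ_succ,
      Fin.sum_univ_castSucc, add_comm]
  rw [← Nat.cast_inj (R := ℤ), Nat.cast_sum, Finset.sum_congr rfl fun i _ => hterm i, htelescope]
  simp [g, hk0, hkt]

variable {F : Type*} [Field F] {r s t : ℕ} {k : Fin (t + 1) → ℕ}

lemma matSimilar_jordanBlockDiag_of_generators (hrs : r ≤ s) (hmono : Monotone k) (hk0 : k 0 = 0)
    (hkt : k (Fin.last t) = r) {f : Fin t → F[X]} (hdeg : ∀ i, (f i).natDegree ≤ k i.castSucc)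
    (heval : ∀ i, (f i).eval (-1) ≠ 0)
    (hvan : ∀ i, FormVanishes r s (r + s - k i.succ)
      (f i * (X + 1) ^ (r + s - k i.succ - k i.castSucc))) :
    MatSimilar F (jordanBlock F r ⊗ₖ jordanBlock F s)
      (jordanBlockDiag F fun x : (i : Fin t) × Fin (k i.succ - k i.castSucc) =>
        r + s - k x.1.succ - k x.1.castSucc) := by
  have hk (i) : k i ≤ r := hkt ▸ hmono (Fin.le_last i)
  let Z : Module.End F (Fin r × Fin s → F) := (jordanBlock F r ⊗ₖ jordanBlock F s).mulVecLin - 1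
  have hZ (i j) : Z (tensorMonomial F r s i j) =
      tensorMonomial F r s (i + 1) j + tensorMonomial F r s i (j + 1) := by
    simp [Z, kronecker_mulVec_tensorMonomial]
  let q (x : (i : Fin t) × Fin (k i.succ - k i.castSucc)) : Fin r × Fin s → F :=
    formEval (tensorMonomial F r s) (k x.1.castSucc + x.2) (f x.1)
  have hkill (x) : (Z ^ (r + s - k x.1.succ - k x.1.castSucc)) (q x) = 0 := by
    have hcast := hk x.1.castSucc
    have hsucc := hk x.1.succ
    rw [pow_apply_formEval hZ ((hdeg x.1).trans (Nat.le_add_right _ _))]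
    exact formEval_eq_zero (fun _ _ => tensorMonomial_eq_zero) ((hvan x.1).mono (by omega))
  have hgen (R : Submodule F (Fin r × Fin s → F)) (hR : ∀ v ∈ R, Z v ∈ R) (hq : ∀ x, q x ∈ R) :
      R = ⊤ := by
    refine eq_top_of_formEval_generators hZ hR fun n hn => ?_
    obtain ⟨i, hi, hi'⟩ := exists_castSucc_le_lt_succ (hk0.trans_le n.zero_le)
      (hn.trans_eq hkt.symm)
    refine ⟨f i, (hdeg i).trans hi, heval i, ?_⟩
    simpa only [q, Nat.add_sub_cancel' hi] using hq ⟨i, n - k i.castSucc, by omega⟩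
  have hdim : Module.finrank F (Fin r × Fin s → F) =
      ∑ x : (i : Fin t) × Fin (k i.succ - k i.castSucc), (r + s - k x.1.succ - k x.1.castSucc) := by
    simp [Fintype.sum_sigma, sum_gap_mul_length hmono hk0 hkt hrs]
  obtain ⟨e, he⟩ := exists_equiv_jordanBlockDiag hkill hgen hdim
  exact ⟨e, fun v => by simp [← he, Z]⟩

lemma strictAnti_add_sub_succ_sub_castSucc (hmono : StrictMono k) (hk : ∀ i, k i ≤ r)
    (hrs : r ≤ s) : StrictAnti fun i : Fin t => r + s - k i.succ - k i.castSucc := by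
  intro i j hij
  have hcast := hmono (Fin.castSucc_lt_castSucc_iff.mpr hij)
  have hsucc := hmono (Fin.succ_lt_succ_iff.mpr hij)
  have hjcast := hk j.castSucc
  have hjsucc := hk j.succ
  dsimp only
  omega

end Decomposition

theorem stmt_11_general {F : Type*} [Field F] (r s : ℕ) (hrs : r ≤ s)
    (t : ℕ) (kseq : Fin (t + 1) → ℕ) (hmono : StrictMono kseq)
    (hjump : ∀ i, kseq i ≤ r ∧ (Ddet r s (kseq i) : F) ≠ 0)
    (hall : ∀ k : ℕ, k ≤ r → (Ddet r s k : F) ≠ 0 → ∃ i, kseq i = k) :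
    kseq 0 = 0 ∧ kseq (Fin.last t) = r ∧
    MatSimilar F (jordanBlock F r ⊗ₖ jordanBlock F s)
      (jordanBlockDiag F
        (fun x : (i : Fin t) × Fin (kseq i.succ - kseq i.castSucc) =>
          r + s - kseq x.1.succ - kseq x.1.castSucc)) ∧
    StrictAnti (fun i : Fin t => r + s - kseq i.succ - kseq i.castSucc) := by
  have hk0 : kseq 0 = 0 := by
    obtain ⟨i, hi⟩ := hall 0 r.zero_le (by simp [Ddet_zero])
    exact Nat.eq_zero_of_le_zero ((hmono.monotone i.zero_le).trans_eq hi)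
  have hkt : kseq (Fin.last t) = r := by
    obtain ⟨i, hi⟩ := hall r le_rfl (by simp [Ddet_self hrs])
    exact (hjump _).1.antisymm (hi.symm.trans_le (hmono.monotone i.le_last))
  have hgap (i : Fin t) (k : ℕ) (hlt : kseq i.castSucc < k) (hgt : k < kseq i.succ) :
      (Ddet r s k : F) = 0 := by
    by_contra hk
    obtain ⟨j, hj⟩ := hall k (hgt.le.trans (hjump _).1) hk
    exact ne_of_castSucc_lt_of_lt_succ hmono hlt hgt j hj
  choose f hdeg heval hvan using fun i : Fin t =>
    exists_generator (hmono i.castSucc_lt_succ) (hjump _).1 hrs (hjump _).2 (hgap i)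
  exact ⟨hk0, hkt, matSimilar_jordanBlockDiag_of_generators hrs hmono.monotone hk0 hkt hdeg heval
    hvan, strictAnti_add_sub_succ_sub_castSucc hmono (fun i => (hjump i).1) hrs⟩

/-- Iima–Iwamatsu decomposition: if `k₀ < k₁ < ⋯ < k_t` lists all `k ∈ [0, r]` with
`p ∤ D_k(r,s)`, then `k₀ = 0`, `k_t = r`, and `J_r ⊗ J_s` decomposes into `k_i − k_{i−1}`
blocks `J_{r+s−k_i−k_{i−1}}` for `1 ≤ i ≤ t`, with strictly decreasing part sizes. -/
theorem stmt_11 {F : Type*} [Field F] (p : ℕ) (hp : p.Prime) [CharP F p]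
    (r s : ℕ) (hr : 1 ≤ r) (hrs : r ≤ s)
    (t : ℕ) (kseq : Fin (t + 1) → ℕ) (hmono : StrictMono kseq)
    (hjump : ∀ i, kseq i ≤ r ∧ ¬ (p : ℤ) ∣ Ddet r s (kseq i))
    (hall : ∀ k : ℕ, k ≤ r → ¬ (p : ℤ) ∣ Ddet r s k → ∃ i, kseq i = k) :
    kseq 0 = 0 ∧ kseq (Fin.last t) = r ∧
    MatSimilar F (jordanBlock F r ⊗ₖ jordanBlock F s)
      (jordanBlockDiag F
        (fun x : (i : Fin t) × Fin (kseq i.succ - kseq i.castSucc) =>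
          r + s - kseq x.1.succ - kseq x.1.castSucc)) ∧
    StrictAnti (fun i : Fin t => r + s - kseq i.succ - kseq i.castSucc) := by
  simp only [← CharP.intCast_eq_zero_iff F p] at hjump hall
  exact stmt_11_general r s hrs t kseq hmono hjump hall
end

section
/- For all integers 1 ≤ k ≤ r ≤ s, the determinant D_k(r,s) satisfies the identity of rational numbers D_k(r,s) = Π_{i=0}^{k−1} C(r+s−2k+i, s−k) / C(s−k+i, s−k); equivalently, D_k(r,s) · Π_{i=0}^{k−1} C(s−k+i, s−k) = Π_{i=0}^{k−1} C(r+s−2k+i, s−k). -/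
/-!
Put `a = s - k` and `b = r - k`. The `(i, j)` entry of the matrix is the coefficient of
`X ^ (a + i)` in `(X + 1) ^ (a + b) * X ^ j`. Multiplying the polynomials in row `i` by
`(X + 1) ^ i` adds to each row of coefficients a combination of the rows above it, so it preserves
the determinant and turns the entries into `C(a + b + i, a + i - j)`. Scaling row `i` by `(a + i)!`
and column `j` by `(b + j)!` then gives `(a + b + i)!` times the falling factorial of length `j` of
`a + i`. Falling factorials are monic polynomials of degree `j`, so what remains is the Vandermonde
determinant of `a, …, a + k - 1`, which is `∏ i!`.
-/

section

open Finset Matrix Polynomial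
open scoped Nat

theorem prod_add_choose_mul_factorial {ι : Type*} (t : Finset ι) (a : ℕ) (f : ι → ℕ) :
    (∏ i ∈ t, (a + f i).choose a) * (a ! ^ #t * ∏ i ∈ t, (f i)!) = ∏ i ∈ t, (a + f i)! := by
  rw [← prod_const, ← prod_mul_distrib, ← prod_mul_distrib]
  refine prod_congr rfl fun i _ ↦ ?_
  rw [← mul_assoc, Nat.choose_symm_add, Nat.add_choose_mul_factorial_mul_factorial]

theorem coeff_X_add_one_pow_mul_add {R : Type*} [CommSemiring R] (f : R[X]) (a i : ℕ) :
    ((X + 1) ^ i * f).coeff (a + i) =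
      ∑ m ∈ range (i + 1), (i.choose m : R) * f.coeff (a + m) := by
  rw [add_comm X, add_pow, sum_mul, finsetSum_coeff]
  refine sum_congr rfl fun m hm ↦ ?_
  have him : a + i = a + m + (i - m) := by grind
  calc (1 ^ m * X ^ (i - m) * (i.choose m : R[X]) * f).coeff (a + i)
      = (((i.choose m : R[X]) * f) * X ^ (i - m)).coeff (a + m + (i - m)) := by
        rw [← him]; ring_nf
    _ = (i.choose m : R) * f.coeff (a + m) := by rw [coeff_mul_X_pow, coeff_natCast_mul]

theorem det_choose_eq_one (R : Type*) [CommRing R] (k : ℕ) :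
    (of fun i m : Fin k ↦ ((i : ℕ).choose m : R)).det = 1 := by
  rw [det_of_isLowerTriangular]
  · simp
  · intro i m him
    have him : (i : ℕ) < m := by simpa using him
    simp [Nat.choose_eq_zero_of_lt him]

theorem det_coeff_X_add_one_pow_mul {R : Type*} [CommRing R] {k : ℕ} (f : Fin k → R[X]) (a : ℕ) :
    (of fun i j : Fin k ↦ ((X + 1) ^ (i : ℕ) * f j).coeff (a + i)).det =
      (of fun i j : Fin k ↦ (f j).coeff (a + i)).det := by
  rw [← one_mul (det (of fun i j : Fin k ↦ (f j).coeff (a + i))), ← det_choose_eq_one R k,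
    ← det_mul]
  congr 1
  ext i j
  rw [of_apply, coeff_X_add_one_pow_mul_add, mul_apply]
  simp only [of_apply]
  rw [Fin.sum_univ_eq_sum_range fun m ↦ ((i : ℕ).choose m : R) * (f j).coeff (a + m)]
  refine sum_subset (range_mono i.isLt) fun m _ hm ↦ ?_
  rw [Nat.choose_eq_zero_of_lt (by simpa using hm), Nat.cast_zero, zero_mul]

theorem factorial_mul_factorial_mul_coeff {R : Type*} [CommSemiring R] (m b j : ℕ) :
    (m ! : R) * ((b + j)! * ((X + 1) ^ (m + b) * X ^ j : R[X]).coeff m) =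
      (m + b)! * m.descFactorial j := by
  rw [coeff_mul_X_pow', coeff_X_add_one_pow]
  split_ifs with h
  · obtain ⟨c, rfl⟩ := Nat.exists_eq_add_of_le' h
    have hdesc : c ! * (c + j).descFactorial j = (c + j)! := by
      simpa using Nat.factorial_mul_descFactorial h
    have hchoose : (c + (b + j)).choose c * c ! * (b + j)! = (c + (b + j))! := by
      rw [Nat.choose_symm_add, Nat.add_choose_mul_factorial_mul_factorial]
    rw [Nat.add_sub_cancel, show c + j + b = c + (b + j) by ring, ← hdesc, ← hchoose]
    push_cast
    ring
  · rw [Nat.descFactorial_of_lt (not_le.mp h)]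
    simp

theorem det_descFactorial_eq_det_vandermonde {k : ℕ} (v : Fin k → ℕ) :
    (of fun i j : Fin k ↦ ((v i).descFactorial j : ℤ)).det =
      (vandermonde fun i ↦ (v i : ℤ)).det := by
  rw [det_eval_matrixOfPolynomials_eq_det_vandermonde _ (fun j : Fin k ↦ descPochhammer ℤ j)
    (fun j ↦ descPochhammer_natDegree ℤ j) (fun j ↦ monic_descPochhammer ℤ j)]
  simp only [descPochhammer_eval_eq_descFactorial]

theorem det_vandermonde_natCast_eq_prod_factorial (R : Type*) [CommRing R] (k : ℕ) :
    (vandermonde fun i : Fin k ↦ ((i : ℕ) : R)).det = ∏ i ∈ range k, (i ! : R) := by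
  cases k with
  | zero => simp
  | succ n =>
    rw [det_vandermonde_id_eq_superFactorial, ← Nat.prod_range_succ_factorial, Nat.cast_prod]

theorem det_descFactorial_add (a k : ℕ) :
    (of fun i j : Fin k ↦ ((a + i : ℕ).descFactorial j : ℤ)).det = ∏ i ∈ range k, (i ! : ℤ) := by
  rw [det_descFactorial_eq_det_vandermonde fun i : Fin k ↦ a + (i : ℕ),
    ← det_vandermonde_natCast_eq_prod_factorial,
    ← det_vandermonde_add (fun i : Fin k ↦ ((i : ℕ) : ℤ)) a]
  simp only [Nat.cast_add, add_comm]

theorem Dmat_add_add (a b k : ℕ) :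
    Dmat (b + k) (a + k) k =
      of fun i j : Fin k ↦ ((X + 1) ^ (a + b) * X ^ (j : ℕ) : ℤ[X]).coeff (a + i) := by
  ext i j
  rw [of_apply, coeff_mul_X_pow', coeff_X_add_one_pow, Dmat, of_apply,
    show b + k + (a + k) - 2 * k = a + b by lia, show a + k + (i : ℕ) - j - k = a + i - j by lia]
  exact if_congr (by lia) rfl rfl

theorem Ddet_add_add (a b k : ℕ) :
    Ddet (b + k) (a + k) k =
      (of fun i j : Fin k ↦ ((X + 1) ^ (a + i + b) * X ^ (j : ℕ) : ℤ[X]).coeff (a + i)).det := by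
  rw [Ddet, Dmat_add_add, ← det_coeff_X_add_one_pow_mul]
  simp only [← mul_assoc, ← pow_add, add_left_comm, add_comm]

theorem prod_factorial_mul_Ddet_add_add (a b k : ℕ) :
    (∏ i ∈ range k, ((a + i)! : ℤ)) * ((∏ j ∈ range k, ((b + j)! : ℤ)) * Ddet (b + k) (a + k) k) =
      (∏ i ∈ range k, ((a + (b + i))! : ℤ)) * ∏ i ∈ range k, (i ! : ℤ) := by
  rw [Ddet_add_add, ← det_descFactorial_add a k,
    ← Fin.prod_univ_eq_prod_range fun i ↦ ((a + i)! : ℤ),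
    ← Fin.prod_univ_eq_prod_range fun j ↦ ((b + j)! : ℤ),
    ← Fin.prod_univ_eq_prod_range fun i ↦ ((a + (b + i))! : ℤ),
    ← det_mul_row, ← det_mul_column, ← det_mul_column]
  congr 1
  ext i j
  simpa only [of_apply, add_right_comm, add_assoc, add_comm b] using
    factorial_mul_factorial_mul_coeff (R := ℤ) (a + i) b j

end

theorem stmt_12_general (r s k : ℕ) (hkr : k ≤ r) (hks : k ≤ s) :
    Ddet r s k * ∏ i ∈ Finset.range k, ((s - k + i).choose (s - k) : ℤ) =
      ∏ i ∈ Finset.range k, ((r + s - 2 * k + i).choose (s - k) : ℤ) := by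
  obtain ⟨b, rfl⟩ := Nat.exists_eq_add_of_le' hkr
  obtain ⟨a, rfl⟩ := Nat.exists_eq_add_of_le' hks
  rw [show b + k + (a + k) - 2 * k = a + b by lia, Nat.add_sub_cancel]
  simp only [add_assoc a b]
  have key := prod_factorial_mul_Ddet_add_add a b k
  have hden := prod_add_choose_mul_factorial (Finset.range k) a fun i ↦ i
  have hnum := prod_add_choose_mul_factorial (Finset.range k) a fun i ↦ b + i
  have hne (f : ℕ → ℕ) : ∏ i ∈ Finset.range k, ((f i).factorial : ℤ) ≠ 0 :=
    Finset.prod_ne_zero_iff.mpr fun i _ ↦ mod_cast (f i).factorial_ne_zero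
  have ha_ne : (a.factorial : ℤ) ^ (Finset.range k).card ≠ 0 :=
    pow_ne_zero _ (mod_cast a.factorial_ne_zero)
  zify at hden hnum
  rw [← hden, ← hnum] at key
  refine mul_right_cancel₀ (mul_ne_zero (mul_ne_zero ha_ne (hne fun i ↦ i)) (hne fun i ↦ b + i)) ?_
  linear_combination key

/-- Closed formula: `D_k(r,s) · Π_{i<k} C(s−k+i, s−k) = Π_{i<k} C(r+s−2k+i, s−k)`. -/
theorem stmt_12 (r s k : ℕ) (hk : 1 ≤ k) (hkr : k ≤ r) (hrs : r ≤ s) :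
    Ddet r s k * ∏ i ∈ Finset.range k, ((s - k + i).choose (s - k) : ℤ) =
      ∏ i ∈ Finset.range k, ((r + s - 2 * k + i).choose (s - k) : ℤ) :=
  stmt_12_general r s k hkr (hkr.trans hrs)
end

section
/- For all integers r, s, k with 1 ≤ r ≤ s and 0 ≤ k ≤ r−1, the identity of integers C(s, s−k) · D_{k+1}(r, s+1) = C(r+s−2k−1, s−k) · D_k(r,s) holds. -/
open Polynomial Finset
open scoped Nat

theorem sum_neg_one_pow_mul_choose_mul_eval {R : Type*} [CommRing R] (P : R[X]) :
    ∑ j ∈ range (P.natDegree + 1), (-1 : R) ^ j * P.natDegree.choose j * P.eval (j : R) =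
      (-1) ^ P.natDegree * P.leadingCoeff * P.natDegree ! := by
  have fwdDiff_eq := congr_fun P.fwdDiff_iter_degree_eq_factorial 0
  simp only [fwdDiff_iter_eq_sum_shift, Pi.smul_apply, Pi.natCast_apply, smul_eq_mul, zero_add,
    nsmul_eq_mul, mul_one, zsmul_eq_mul] at fwdDiff_eq
  rw [mul_assoc, ← fwdDiff_eq, mul_sum]
  refine sum_congr rfl fun j hj => ?_
  have sign_eq : (-1 : R) ^ P.natDegree * (-1) ^ (P.natDegree - j) = (-1) ^ j := by
    obtain ⟨d, hd⟩ := Nat.exists_eq_add_of_le (mem_range_succ_iff.mp hj)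
    simp [hd, pow_add, mul_assoc, ← mul_pow]
  push_cast
  rw [← sign_eq]
  ring

theorem sum_neg_one_pow_mul_choose_mul_descFactorial_mul_descFactorial (a b u v : ℕ) :
    ∑ j ∈ range (u + v + 1), (-1 : ℤ) ^ j * (u + v).choose j *
      ((b + (u + v) - j).descFactorial u * (a + j).descFactorial v) =
      (-1) ^ v * (u + v)! := by
  set p : ℤ[X] := (descPochhammer ℤ u).comp (C (-1) * X + C ((b + (u + v) : ℕ) : ℤ)) with hp
  set q : ℤ[X] := (descPochhammer ℤ v).comp (X + C (a : ℤ)) with hq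
  have natDegree_linear_ne_zero : (C (-1) * X + C ((b + (u + v) : ℕ) : ℤ)).natDegree ≠ 0 := by
    rw [natDegree_linear (by simp)]
    exact one_ne_zero
  have leadingCoeff_p : p.leadingCoeff = (-1) ^ u := by
    rw [hp, leadingCoeff_comp natDegree_linear_ne_zero, (monic_descPochhammer ℤ u).leadingCoeff,
      leadingCoeff_linear (by simp), descPochhammer_natDegree, one_mul]
  have monic_q : q.Monic := (monic_descPochhammer ℤ v).comp_X_add_C _
  have natDegree_mul_eq : (p * q).natDegree = u + v := by
    rw [natDegree_mul (leadingCoeff_ne_zero.mp (by simp [leadingCoeff_p])) monic_q.ne_zero, hp, hq,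
      natDegree_comp, natDegree_comp, natDegree_linear (by simp), natDegree_X_add_C,
      descPochhammer_natDegree, descPochhammer_natDegree, mul_one, mul_one]
  have alternating_sum := sum_neg_one_pow_mul_choose_mul_eval (p * q)
  rw [natDegree_mul_eq, leadingCoeff_mul, leadingCoeff_p, monic_q.leadingCoeff] at alternating_sum
  have sign_eq : (-1 : ℤ) ^ (u + v) * ((-1) ^ u * 1) = (-1) ^ v := by
    simp [pow_add, mul_right_comm, ← mul_pow]
  rw [← sign_eq, ← alternating_sum]
  refine sum_congr rfl fun j hj => ?_
  have hj' : j ≤ b + (u + v) := (mem_range_succ_iff.mp hj).trans (Nat.le_add_left _ _)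
  have eval_p : p.eval (j : ℤ) = (b + (u + v) - j).descFactorial u := by
    rw [← descPochhammer_eval_eq_descFactorial ℤ, Nat.cast_sub hj', hp]
    simp [neg_add_eq_sub]
  have eval_q : q.eval (j : ℤ) = (a + j).descFactorial v := by
    rw [← descPochhammer_eval_eq_descFactorial ℤ, hq]
    simp [add_comm]
  rw [eval_mul, eval_p, eval_q]

theorem det_eq_mul_det_add_pred_row {R : Type*} [CommRing R] {n : ℕ}
    (M : Matrix (Fin (n + 1)) (Fin (n + 1)) R) (h : ∀ i : Fin n, M i.succ 0 + M i.castSucc 0 = 0) :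
    M.det =
      M 0 0 * (Matrix.of fun i j : Fin n => M i.succ j.succ + M i.castSucc j.succ).det := by
  set N : Matrix (Fin (n + 1)) (Fin (n + 1)) R :=
    Matrix.of (Fin.cons (M 0) fun i j => M i.succ j + M i.castSucc j) with hN
  have det_eq : M.det = N.det :=
    Matrix.det_eq_of_forall_row_eq_smul_add_pred (fun _ => -1) (fun j => by simp [hN])
      fun i j => by simp [hN]
  rw [det_eq, Matrix.det_succ_column_zero, Fin.sum_univ_succ]
  simp [hN, h, Matrix.submatrix]

/-- The binomial coefficient `C(n, m)` with integer lower index, zero for `m < 0`. -/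
def intChoose (n : ℕ) : ℤ → ℤ
  | .ofNat m => n.choose m
  | .negSucc _ => 0

theorem intChoose_natCast (n m : ℕ) : intChoose n m = n.choose m := rfl

theorem intChoose_zero (n : ℕ) : intChoose n 0 = 1 := by
  rw [← Nat.cast_zero, intChoose_natCast, Nat.choose_zero_right, Nat.cast_one]

theorem intChoose_of_neg (n : ℕ) {m : ℤ} (hm : m < 0) : intChoose n m = 0 := by
  obtain ⟨m, rfl⟩ := Int.eq_negSucc_of_lt_zero hm
  rfl

theorem intChoose_succ (n : ℕ) (m : ℤ) :
    intChoose (n + 1) m = intChoose n m + intChoose n (m - 1) := by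
  rcases lt_trichotomy m 0 with hm | rfl | hm
  · rw [intChoose_of_neg _ hm, intChoose_of_neg _ hm, intChoose_of_neg _ (by omega), add_zero]
  · rw [intChoose_zero, intChoose_zero, intChoose_of_neg _ (by omega), add_zero]
  · obtain ⟨m, rfl⟩ : ∃ l : ℕ, m = (l + 1 : ℕ) := ⟨(m - 1).toNat, by omega⟩
    rw [Nat.cast_succ, add_sub_cancel_right, ← Nat.cast_succ]
    simp only [intChoose_natCast]
    rw [Nat.choose_succ_succ', Nat.cast_add, add_comm]

theorem factorial_mul_factorial_mul_intChoose {n x y u v : ℕ} (h : x + y = n + u + v) :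
    (x ! * y ! : ℤ) * intChoose n (x - u) = n ! * (x.descFactorial u * y.descFactorial v) := by
  rcases lt_or_ge x u with hx | hx
  · rw [intChoose_of_neg _ (by omega), Nat.descFactorial_of_lt hx]
    simp
  rw [← Nat.cast_sub hx, intChoose_natCast]
  rcases lt_or_ge y v with hy | hy
  · rw [Nat.choose_eq_zero_of_lt (by omega), Nat.descFactorial_of_lt hy]
    simp
  · have choose_mul := Nat.choose_mul_factorial_mul_factorial (show x - u ≤ n by omega)
    rw [show n - (x - u) = y - v by omega] at choose_mul
    rw [← Nat.factorial_mul_descFactorial hx, ← Nat.factorial_mul_descFactorial hy, ← choose_mul]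
    push_cast
    ring

/-- The `k × k` Toeplitz matrix with entries `C(n, b + i - j)`. Every `Dmat` has this form, with the
offset `b = s - k` taken in `ℤ`. -/
def binomToeplitz (n : ℕ) (b : ℤ) (k : ℕ) : Matrix (Fin k) (Fin k) ℤ :=
  Matrix.of fun i j => intChoose n (b + i - j)

theorem Dmat_eq_binomToeplitz (r s k : ℕ) :
    Dmat r s k = binomToeplitz (r + s - 2 * k) (s - k) k := by
  ext i j
  simp only [Dmat, binomToeplitz, Matrix.of_apply]
  split_ifs with h
  · rw [← intChoose_natCast]
    congr 1
    omega
  · rw [intChoose_of_neg _ (by omega)]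

/-- The column weights whose combination of the columns of `binomToeplitz (a + b) b (k + 1)` is an
alternating vector. -/
def columnWeight (a b k j : ℕ) : ℤ :=
  (-1) ^ j * k.choose j * ((b + k - j)! * (a + j)!)

theorem sum_columnWeight_mul_binomToeplitz (a b k : ℕ) (i : Fin (k + 1)) :
    ∑ j : Fin (k + 1), columnWeight a b k j * binomToeplitz (a + b) b (k + 1) i j =
      (-1) ^ (i : ℕ) * ((a + b)! * k !) := by
  have alternating_sum :=
    sum_neg_one_pow_mul_choose_mul_descFactorial_mul_descFactorial a b (k - i) i
  rw [Nat.sub_add_cancel (by omega), sum_range] at alternating_sum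
  rw [mul_left_comm, ← alternating_sum, mul_sum]
  refine sum_congr rfl fun j _ => ?_
  have entry := factorial_mul_factorial_mul_intChoose
    (show (b + k - j) + (a + j) = (a + b) + (k - i) + i by omega)
  rw [show ((b + k - j : ℕ) : ℤ) - (k - i : ℕ) = b + i - j by omega] at entry
  simp only [columnWeight, binomToeplitz, Matrix.of_apply]
  linear_combination ((-1 : ℤ) ^ (j : ℕ) * k.choose j) * entry

theorem factorial_mul_factorial_mul_det_binomToeplitz_succ (a b k : ℕ) :
    ((b + k)! * a ! : ℤ) * (binomToeplitz (a + b) b (k + 1)).det =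
      (a + b)! * k ! * (binomToeplitz (a + b + 1) b k).det := by
  set M := (binomToeplitz (a + b) b (k + 1)).updateCol 0
    fun i => (-1) ^ (i : ℕ) * ((a + b)! * k ! : ℤ) with hM
  have det_M : M.det = ((b + k)! * a ! : ℤ) * (binomToeplitz (a + b) b (k + 1)).det := by
    have det_updateCol :=
      Matrix.det_updateCol_sum (binomToeplitz (a + b) b (k + 1)) 0 fun j => columnWeight a b k j
    simp only [smul_eq_mul, sum_columnWeight_mul_binomToeplitz] at det_updateCol
    simpa [columnWeight] using det_updateCol
  have minor_eq : (Matrix.of fun i j : Fin k => M i.succ j.succ + M i.castSucc j.succ) =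
      binomToeplitz (a + b + 1) b k := by
    ext i j
    simp only [hM, binomToeplitz, Matrix.of_apply, Matrix.updateCol_ne (Fin.succ_ne_zero j),
      Fin.val_succ, Fin.val_castSucc, Nat.cast_succ, intChoose_succ]
    congr 2 <;> ring
  rw [← det_M, det_eq_mul_det_add_pred_row M fun i => by simp [hM, pow_succ], minor_eq]
  simp [hM]

theorem choose_mul_det_binomToeplitz_succ (a b k : ℕ) :
    ((b + k).choose b : ℤ) * (binomToeplitz (a + b) b (k + 1)).det =
      (a + b).choose b * (binomToeplitz (a + b + 1) b k).det := by
  have choose_left : ((b + k).choose b : ℤ) * b ! * k ! = (b + k)! := by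
    rw [Nat.choose_symm_add]
    exact_mod_cast Nat.add_choose_mul_factorial_mul_factorial b k
  have choose_right : ((a + b).choose b : ℤ) * a ! * b ! = (a + b)! := mod_cast
    Nat.add_choose_mul_factorial_mul_factorial a b
  have det_identity := factorial_mul_factorial_mul_det_binomToeplitz_succ a b k
  rw [← choose_left, ← choose_right] at det_identity
  refine mul_left_cancel₀ (show (b ! * k ! * a ! : ℤ) ≠ 0 by positivity) ?_
  linear_combination det_identity

theorem stmt_14_general (r s k : ℕ) (hkr : k < r) (hks : k ≤ s) :
    (s.choose (s - k) : ℤ) * Ddet r (s + 1) (k + 1) =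
      ((r + s - 2 * k - 1).choose (s - k) : ℤ) * Ddet r s k := by
  obtain ⟨a, rfl⟩ : ∃ a, r = a + k + 1 := ⟨r - k - 1, by omega⟩
  obtain ⟨b, rfl⟩ : ∃ b, s = b + k := ⟨s - k, by omega⟩
  have large : Ddet (a + k + 1) (b + k + 1) (k + 1) = (binomToeplitz (a + b) b (k + 1)).det := by
    rw [Ddet, Dmat_eq_binomToeplitz]
    congr 2 <;> omega
  have small : Ddet (a + k + 1) (b + k) k = (binomToeplitz (a + b + 1) b k).det := by
    rw [Ddet, Dmat_eq_binomToeplitz]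
    congr 2 <;> omega
  rw [large, small, show a + k + 1 + (b + k) - 2 * k - 1 = a + b by omega, Nat.add_sub_cancel]
  exact choose_mul_det_binomToeplitz_succ a b k

/-- `C(s, s−k) · D_{k+1}(r, s+1) = C(r+s−2k−1, s−k) · D_k(r,s)`. -/
theorem stmt_14 (r s k : ℕ) (hr : 1 ≤ r) (hrs : r ≤ s) (hkr : k ≤ r - 1) :
    (s.choose (s - k) : ℤ) * Ddet r (s + 1) (k + 1) =
      ((r + s - 2 * k - 1).choose (s - k) : ℤ) * Ddet r s k :=
  stmt_14_general r s k (by omega) (by omega)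
end

section
/- Let p be a prime, F a field of characteristic p, and r a positive integer. Suppose the Kronecker product J_r ⊗ J_r is similar over F to the block-diagonal matrix with diagonal blocks J_{λ_1},…,J_{λ_r}, where λ_1 ≥ ⋯ ≥ λ_r > 0. Then the smallest part λ_r equals the p-part r_p of r, and the number of indices i with λ_i = r_p is exactly r_p. -/
open Kronecker

/-- The `p`-part of `n`: the largest power of `p` dividing `n`. -/
def pPart (p n : ℕ) : ℕ := p ^ (n.factorization p)

/-!
Let `A = F[x]/(x ^ r)`. The Jordan block `J_r` is the matrix of multiplication by `1 + x` on `A`,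
so `J_r ⊗ J_r` is the matrix of multiplication by `(1 + x) ⊗ (1 + y)` on `A ⊗ A`. Put
`T = (1 + x) ⊗ (1 + y) - 1`. Since `1 + x` is a unit and `T - x = (1 + x) ⊗ y`, the element `T`
generates `A ⊗ A` over `A` and satisfies `(T - x) ^ r = 0`, whence `A ⊗ A ≃ A[T]/((T - x) ^ r)`.

Write `r = k * m` with `k = r_p`. As `k` is a power of `p` and `x ^ r = 0`,
`(T - x) ^ r = (T ^ k - x ^ k) ^ m ≡ m * (-x ^ k) ^ (m - 1) * T ^ k` modulo `T ^ (k + 1)`, and `m`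
is a unit. So the nullity of `(J_r ⊗ J_r - 1) ^ k` is `dim A[T]/(T ^ k) = k * r`, and that of
`(J_r ⊗ J_r - 1) ^ (k + 1)` is `dim A[T]/(T ^ (k + 1), x ^ (r - k) * T ^ k) = k * r + (r - k)`.
On the other side these nullities are `∑ i, min k (λ i)` and `∑ i, min (k + 1) (λ i)`: the first
value forces `k ≤ λ i` for all `i`, and the second says that equality holds exactly `k` times.
-/

open Polynomial TensorProduct Module
open AdjoinRoot (root)

section Nullity

variable {F : Type*} [Field F]

/-- The nullity of a square matrix: the dimension of the kernel of `v ↦ A *ᵥ v`. The nullities of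
the powers of `A - 1` are the similarity invariants that distinguish unipotent matrices. -/
noncomputable def nullity {n : Type*} [Fintype n] (A : Matrix n n F) : ℕ :=
  finrank F (LinearMap.ker A.mulVecLin)

lemma MatSimilar.nullity_sub_one_pow {n m : Type*} [Fintype n] [DecidableEq n] [Fintype m]
    [DecidableEq m] {A : Matrix n n F} {B : Matrix m m F} (h : MatSimilar F A B) (j : ℕ) :
    nullity ((A - 1) ^ j) = nullity ((B - 1) ^ j) := by
  obtain ⟨e, he⟩ := h
  have he_pow (v : n → F) : e (((A - 1) ^ j).mulVec v) = ((B - 1) ^ j).mulVec (e v) := by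
    induction j generalizing v with
    | zero => simp
    | succ j ih =>
      rw [pow_succ, pow_succ, ← Matrix.mulVec_mulVec, ← Matrix.mulVec_mulVec, ih]
      simp only [Matrix.sub_mulVec, Matrix.one_mulVec, map_sub, he]
  have hker : LinearMap.ker ((A - 1) ^ j).mulVecLin =
      (LinearMap.ker ((B - 1) ^ j).mulVecLin).comap (e : (n → F) →ₗ[F] (m → F)) := by
    ext v
    simp [← he_pow]
  rw [nullity, hker]
  exact (e.ofSubmodule' _).finrank_eq

lemma blockDiagonal'_mulVec_apply {R ι : Type*} [NonUnitalNonAssocSemiring R] [Fintype ι]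
    [DecidableEq ι] {m n : ι → Type*} [∀ i, Fintype (n i)] (A : ∀ i, Matrix (m i) (n i) R)
    (v : (i : ι) × n i → R) (i : ι) (a : m i) :
    (Matrix.blockDiagonal' A).mulVec v ⟨i, a⟩ = (A i).mulVec (fun b => v ⟨i, b⟩) a := by
  simp only [Matrix.mulVec, dotProduct, Fintype.sum_sigma]
  rw [Fintype.sum_eq_single i fun k hk => by
    simp [Matrix.blockDiagonal'_apply_ne _ _ _ hk.symm]]
  simp

lemma nullity_blockDiagonal' {ι : Type*} [Fintype ι] [DecidableEq ι] {n : ι → Type*}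
    [∀ i, Fintype (n i)] (A : ∀ i, Matrix (n i) (n i) F) :
    nullity (Matrix.blockDiagonal' A) = ∑ i, nullity (A i) := by
  let e : LinearMap.ker (Matrix.blockDiagonal' A).mulVecLin ≃ₗ[F]
      ∀ i, LinearMap.ker (A i).mulVecLin :=
    { toFun := fun v i => ⟨fun a => v.1 ⟨i, a⟩, funext fun a => by
        rw [Matrix.mulVecLin_apply, ← blockDiagonal'_mulVec_apply, ← Matrix.mulVecLin_apply, v.2]
        rfl⟩
      invFun := fun w => ⟨fun x => (w x.1).1 x.2, funext fun x => by
        rw [Matrix.mulVecLin_apply, blockDiagonal'_mulVec_apply, ← Matrix.mulVecLin_apply,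
          (w x.1).2]
        rfl⟩
      map_add' := fun _ _ => rfl
      map_smul' := fun _ _ => rfl }
  simp only [nullity, e.finrank_eq, finrank_pi_fintype]

end Nullity

section LeftMulMatrix

lemma leftMulMatrix_tensorProduct {R S T n m : Type*} [CommRing R] [CommRing S] [Algebra R S]
    [CommRing T] [Algebra R T] [Fintype n] [DecidableEq n] [Fintype m] [DecidableEq m]
    (b : Basis n R S) (c : Basis m R T) (s : S) (t : T) :
    Algebra.leftMulMatrix (b.tensorProduct c) (s ⊗ₜ t) =
      Algebra.leftMulMatrix b s ⊗ₖ Algebra.leftMulMatrix c t := by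
  ext ⟨i, j⟩ ⟨k, l⟩
  simp [Algebra.leftMulMatrix_eq_repr_mul, mul_comm]

lemma nullity_leftMulMatrix {F S n : Type*} [Field F] [CommRing S] [Algebra F S] [Fintype n]
    [DecidableEq n] (b : Basis n F S) (s : S) :
    nullity (Algebra.leftMulMatrix b s) = finrank F (S ⧸ Ideal.span {s}) := by
  have := Module.Finite.of_basis b
  have hker : LinearMap.ker (Algebra.lmul F S s) =
      (LinearMap.ker (Algebra.leftMulMatrix b s).mulVecLin).comap
        (b.equivFun : S →ₗ[F] (n → F)) := by
    ext t
    simp [Algebra.leftMulMatrix_mulVec_repr]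
  have hrange : LinearMap.range (Algebra.lmul F S s) = (Ideal.span {s}).restrictScalars F := by
    ext t
    simp [Ideal.mem_span_singleton, dvd_def]
  have h := (Algebra.lmul F S s).finrank_range_add_finrank_ker
  rw [hrange, hker, (b.equivFun.ofSubmodule' _).finrank_eq,
    ← ((Ideal.span {s}).restrictScalars F).finrank_quotient_add_finrank] at h
  rw [nullity, ← (Submodule.Quotient.restrictScalarsEquiv F (Ideal.span {s})).finrank_eq]
  omega

end LeftMulMatrix

section PolynomialQuotients

variable {F A : Type*} [Field F] [CommRing A] [Algebra F A]

lemma finrank_adjoinRoot_quotient_mk (g h : A[X]) :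
    finrank F (AdjoinRoot g ⧸ Ideal.span {AdjoinRoot.mk g h}) =
      finrank F (A[X] ⧸ Ideal.span {g, h}) := by
  have hmap : Ideal.span {AdjoinRoot.mk g h} =
      (Ideal.span {h}).map (Ideal.Quotient.mkₐ F (Ideal.span {g})) := by
    rw [Ideal.map_span, Set.image_singleton]
    rfl
  rw [Ideal.span_insert, hmap]
  exact (DoubleQuot.quotQuotEquivQuotSupₐ F (Ideal.span {g})
    (Ideal.span {h})).toLinearEquiv.finrank_eq

lemma mem_span_X_pow_succ_pair_iff {c : A} {k : ℕ} {P : A[X]} :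
    P ∈ Ideal.span {X ^ (k + 1), C c * X ^ k} ↔ (∀ i < k, P.coeff i = 0) ∧ c ∣ P.coeff k := by
  constructor
  · rw [Ideal.mem_span_pair]
    rintro ⟨a, b, rfl⟩
    simp only [coeff_add, ← mul_assoc, coeff_mul_X_pow', coeff_mul_C]
    refine ⟨fun i hi => ?_, ?_⟩
    · simp [hi.not_ge, show ¬ k + 1 ≤ i by omega]
    · simp
  · rintro ⟨hlow, d, hd⟩
    obtain ⟨Q, rfl⟩ := X_pow_dvd_iff.2 hlow
    rw [coeff_X_pow_mul', if_pos le_rfl, Nat.sub_self] at hd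
    refine Ideal.mem_span_pair.2 ⟨Q.divX, C d, ?_⟩
    conv_rhs => rw [← Q.divX_mul_X_add, hd, C_mul]
    ring

lemma finrank_quotient_span_X_pow_succ_pair [FiniteDimensional F A] (c : A) (k : ℕ) :
    finrank F (A[X] ⧸ Ideal.span {(X ^ (k + 1) : A[X]), C c * X ^ k}) =
      k * finrank F A + finrank F (A ⧸ Ideal.span {c}) := by
  let φ : A[X] →ₗ[F] (Fin k → A) × (A ⧸ Ideal.span {c}) :=
    (LinearMap.pi fun i : Fin k => (lcoeff A i).restrictScalars F).prod
      ((Ideal.Quotient.mkₐ F (Ideal.span {c})).toLinearMap ∘ₗ (lcoeff A k).restrictScalars F)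
  have hker : LinearMap.ker φ =
      (Ideal.span {X ^ (k + 1), C c * X ^ k} : Ideal A[X]).restrictScalars F := by
    ext P
    simp [φ, mem_span_X_pow_succ_pair_iff, funext_iff, Fin.forall_iff,
      Ideal.Quotient.eq_zero_iff_mem, Ideal.mem_span_singleton]
  have hsurj : Function.Surjective φ := by
    rintro ⟨a, b⟩
    obtain ⟨b, rfl⟩ := Ideal.Quotient.mk_surjective b
    refine ⟨∑ i : Fin k, monomial (i : ℕ) (a i) + monomial k b, ?_⟩
    have hne (i : Fin k) : ¬ (i : ℕ) = k := i.2.ne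
    have hne' (i : Fin k) : ¬ k = i := i.2.ne'
    ext i <;> simp [φ, coeff_monomial, Fin.val_inj, hne, hne']
  rw [← (Submodule.Quotient.restrictScalarsEquiv F _).finrank_eq, ← hker,
    (φ.quotKerEquivOfSurjective hsurj).finrank_eq, finrank_prod, finrank_pi_fintype]
  simp

end PolynomialQuotients

section TensorTruncPoly

/-- The truncated polynomial algebra `F[x]/(x ^ m)`; the class of `x` is `root _`. Multiplication
by `1 + x` on it is the coordinate-free form of the Jordan block `J_m`. -/
abbrev TruncPoly (F : Type*) [Field F] (m : ℕ) : Type _ := AdjoinRoot (X ^ m : F[X])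

namespace TruncPoly

variable (F : Type*) [Field F] (m : ℕ)

/-- The monomial basis `x ^ (m - 1), …, x, 1` of `F[x]/(x ^ m)`, in decreasing order of exponents
so that the matrix of multiplication by `x` has its ones on the superdiagonal. -/
noncomputable def basis : Basis (Fin m) F (TruncPoly F m) :=
  ((AdjoinRoot.powerBasis' (monic_X_pow m)).basis.reindex
    (finCongr (natDegree_X_pow m))).reindex Fin.revPerm

variable {m} in
lemma basis_apply (i : Fin m) : basis F m i = root _ ^ (m - 1 - i : ℕ) := by
  rw [basis, Basis.reindex_apply, Basis.reindex_apply, PowerBasis.coe_basis, Nat.sub_sub,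
    Nat.add_comm 1]
  rfl

instance : FiniteDimensional F (TruncPoly F m) := .of_basis (basis F m)

lemma finrank_eq : finrank F (TruncPoly F m) = m := by
  rw [finrank_eq_card_basis (basis F m), Fintype.card_fin]

variable {m} in
lemma nontrivial (hm : m ≠ 0) : Nontrivial (TruncPoly F m) :=
  AdjoinRoot.nontrivial _ (by simpa using hm)

lemma root_pow : root (X ^ m : F[X]) ^ m = 0 := by
  rw [← AdjoinRoot.mk_X, ← map_pow, AdjoinRoot.mk_self]

lemma isUnit_one_add_root : IsUnit (1 + root (X ^ m : F[X])) :=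
  IsNilpotent.isUnit_one_add ⟨m, root_pow F m⟩

variable {m} in
lemma root_mul_basis (i : Fin m) :
    root _ * basis F m i = if (i : ℕ) = 0 then 0 else basis F m ⟨i - 1, by omega⟩ := by
  rw [basis_apply, ← pow_succ']
  split_ifs with hi
  · rw [show m - 1 - i + 1 = m by omega, root_pow]
  · rw [basis_apply, show m - 1 - i + 1 = m - 1 - (i - 1) by omega]

lemma finrank_quotient_root_pow (j : ℕ) :
    finrank F (TruncPoly F m ⧸ Ideal.span {root (X ^ m : F[X]) ^ j}) = min j m := by
  have hspan : Ideal.span {X ^ m, X ^ j} = Ideal.span {(X : F[X]) ^ min j m} := by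
    rcases le_total j m with h | h
    · rw [min_eq_left h, Ideal.span_pair_eq_span_right_iff_dvd.2 (pow_dvd_pow X h)]
    · rw [min_eq_right h, Ideal.span_pair_eq_span_left_iff_dvd.2 (pow_dvd_pow X h)]
  rw [← AdjoinRoot.mk_X, ← map_pow, finrank_adjoinRoot_quotient_mk, hspan,
    finrank_quotient_span_eq_natDegree, natDegree_X_pow]

end TruncPoly

variable {F A : Type*} [Field F] [CommRing A] [Algebra F A]

lemma exists_algEquiv_tensor_truncPoly [Nontrivial A] [FiniteDimensional F A] {x : A}
    (hx : IsUnit (1 + x)) (r : ℕ) :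
    ∃ e : AdjoinRoot ((X - C x) ^ r) ≃ₐ[F] A ⊗[F] TruncPoly F r,
      e (root _) = (1 + x) ⊗ₜ (1 + root _) - 1 := by
  set t : A ⊗[F] TruncPoly F r := (1 + x) ⊗ₜ (1 + root _) - 1 with ht
  have ht_sub : t - x ⊗ₜ 1 = (1 + x) ⊗ₜ root _ := by
    rw [ht, Algebra.TensorProduct.one_def]
    simp only [TensorProduct.add_tmul, TensorProduct.tmul_add]
    abel
  have ht_root : ((X - C x) ^ r).eval₂ (Algebra.ofId A (A ⊗[F] TruncPoly F r)).toRingHom t = 0 := by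
    simp [ht_sub, Algebra.TensorProduct.tmul_pow, TruncPoly.root_pow]
  let φ := AdjoinRoot.liftAlgHom ((X - C x) ^ r) (Algebra.ofId A _) t ht_root
  have hφ_root : φ (root _) = t := AdjoinRoot.liftAlgHom_root ..
  have hφ_surj : Function.Surjective φ := by
    rw [← AlgHom.range_eq_top, eq_top_iff, ← Algebra.TensorProduct.adjoin_one_tmul_image_eq_top _
      (AdjoinRoot.adjoinRoot_eq_top (f := (X ^ r : F[X]))), Set.image_singleton]
    obtain ⟨u, hu⟩ := hx
    refine Algebra.adjoin_singleton_le <|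
      (AlgHom.mem_range φ).2 ⟨(↑u⁻¹ : A) • (root _ - algebraMap A _ x), ?_⟩
    rw [map_smul, map_sub, hφ_root, AlgHom.commutes, Algebra.TensorProduct.algebraMap_apply,
      Algebra.algebraMap_self_apply, ht_sub, TensorProduct.smul_tmul', ← hu, smul_eq_mul,
      Units.inv_mul]
  have hmonic : ((X - C x) ^ r).Monic := (monic_X_sub_C x).pow r
  have := hmonic.free_adjoinRoot
  have := hmonic.finite_adjoinRoot
  have : FiniteDimensional F (AdjoinRoot ((X - C x) ^ r)) := Module.Finite.trans A _
  have hrank : finrank F (AdjoinRoot ((X - C x) ^ r)) = finrank F (A ⊗[F] TruncPoly F r) := by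
    rw [← finrank_mul_finrank F A, (AdjoinRoot.powerBasis' hmonic).finrank, finrank_tensorProduct,
      TruncPoly.finrank_eq]
    simp [(monic_X_sub_C x).natDegree_pow]
  have hφ_inj : Function.Injective φ :=
    (LinearMap.injective_iff_surjective_of_finrank_eq_finrank
      (f := (φ.restrictScalars F).toLinearMap) hrank).2 hφ_surj
  exact ⟨AlgEquiv.ofBijective (φ.restrictScalars F) ⟨hφ_inj, hφ_surj⟩, hφ_root⟩

end TensorTruncPoly

section JordanBlocks

variable (F : Type*) [Field F]

lemma jordanBlock_eq_leftMulMatrix (m : ℕ) :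
    jordanBlock F m = Algebra.leftMulMatrix (TruncPoly.basis F m) (1 + root _) := by
  ext a b
  rw [Algebra.leftMulMatrix_eq_repr_mul, add_mul, one_mul, map_add, TruncPoly.root_mul_basis]
  simp only [jordanBlock, Matrix.of_apply, apply_ite (TruncPoly.basis F m).repr, map_zero,
    Basis.repr_self, Finsupp.add_apply]
  split_ifs <;> grind

lemma nullity_jordanBlock_sub_one_pow (m j : ℕ) :
    nullity ((jordanBlock F m - 1) ^ j) = min j m := by
  rw [jordanBlock_eq_leftMulMatrix, map_add, map_one, add_sub_cancel_left, ← map_pow,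
    nullity_leftMulMatrix, TruncPoly.finrank_quotient_root_pow]

lemma nullity_jordanBlockDiag_sub_one_pow {ι : Type} [Fintype ι] [DecidableEq ι] (d : ι → ℕ)
    (j : ℕ) : nullity ((jordanBlockDiag F d - 1) ^ j) = ∑ i, min j (d i) := by
  rw [jordanBlockDiag, ← Matrix.blockDiagonal'_one, ← Matrix.blockDiagonal'_sub,
    ← Matrix.blockDiagonal'_pow, nullity_blockDiagonal']
  exact Finset.sum_congr rfl fun i _ => nullity_jordanBlock_sub_one_pow F (d i) j

lemma nullity_jordanBlock_kronecker_sub_one_pow {s : ℕ} (hs : s ≠ 0) (r j : ℕ) :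
    nullity ((jordanBlock F s ⊗ₖ jordanBlock F r - 1) ^ j) =
      finrank F (AdjoinRoot ((X - C (root (X ^ s : F[X]))) ^ r) ⧸
        Ideal.span {root ((X - C (root (X ^ s : F[X]))) ^ r) ^ j}) := by
  have := TruncPoly.nontrivial F hs
  obtain ⟨e, he⟩ :=
    exists_algEquiv_tensor_truncPoly (F := F) (TruncPoly.isUnit_one_add_root F s) r
  have hmatrix : (jordanBlock F s ⊗ₖ jordanBlock F r - 1) ^ j = Algebra.leftMulMatrix
      ((TruncPoly.basis F s).tensorProduct (TruncPoly.basis F r)) (e (root _ ^ j)) := by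
    rw [jordanBlock_eq_leftMulMatrix, jordanBlock_eq_leftMulMatrix, ← leftMulMatrix_tensorProduct,
      map_pow, he, map_pow, map_sub, map_one]
  rw [hmatrix, nullity_leftMulMatrix]
  refine (Ideal.quotientEquivAlg _ _ e ?_).symm.toLinearEquiv.finrank_eq
  rw [Ideal.map_span, Set.image_singleton]
  rfl

end JordanBlocks

section PrimePower

variable {p : ℕ} [Fact p.Prime] {e m : ℕ}

lemma X_pow_succ_dvd_X_sub_C_pow_sub {A : Type*} [CommRing A] [CharP A p] {x : A}
    (hx : x ^ (p ^ e * m) = 0) :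
    X ^ (p ^ e + 1) ∣
      (X - C x) ^ (p ^ e * m) - C (m * (-x ^ p ^ e) ^ (m - 1)) * X ^ p ^ e := by
  obtain ⟨Q, hQ⟩ := powAddExpansion (-C (x ^ p ^ e)) (X ^ p ^ e) m
  have hlead : (-C (x ^ p ^ e)) ^ m = 0 := by
    rw [neg_pow, ← C_pow, ← pow_mul, hx, C_0, mul_zero]
  have hfrobenius : (X - C x) ^ (p ^ e * m) = (-C (x ^ p ^ e) + X ^ p ^ e) ^ m := by
    rw [pow_mul, sub_pow_char_pow, C_pow, neg_add_eq_sub]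
  have hle : p ^ e + 1 ≤ p ^ e * 2 := by
    have := pow_pos (Fact.out : p.Prime).pos e
    omega
  rw [hfrobenius, hQ, hlead, ← pow_mul]
  simp only [C_mul, C_pow, C_neg, map_natCast, zero_add, add_sub_cancel_left]
  exact Dvd.dvd.mul_left (pow_dvd_pow X hle) Q

variable {F A : Type*} [Field F] [CommRing A] [Algebra F A] [CharP A p] {x : A}

lemma finrank_adjoinRoot_quotient_root_pow (hx : x ^ (p ^ e * m) = 0) :
    finrank F (AdjoinRoot ((X - C x) ^ (p ^ e * m)) ⧸
      Ideal.span {root ((X - C x) ^ (p ^ e * m)) ^ p ^ e}) =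
      p ^ e * finrank F A := by
  have hdvd : X ^ p ^ e ∣ (X - C x) ^ (p ^ e * m) := by
    rw [← dvd_sub_left (Dvd.intro_left _ rfl)]
    exact (pow_dvd_pow X (Nat.le_succ _)).trans (X_pow_succ_dvd_X_sub_C_pow_sub hx)
  have : Nontrivial A := CharP.nontrivial_of_char_ne_one (Fact.out : p.Prime).ne_one
  have := (monic_X_pow (R := A) (p ^ e)).free_quotient
  rw [← AdjoinRoot.mk_X, ← map_pow, finrank_adjoinRoot_quotient_mk,
    Ideal.span_pair_eq_span_right_iff_dvd.2 hdvd, ← finrank_mul_finrank F A,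
    finrank_quotient_span_eq_natDegree' (monic_X_pow _), natDegree_X_pow, mul_comm]

lemma finrank_adjoinRoot_quotient_root_pow_succ [FiniteDimensional F A] (hm : ¬ p ∣ m)
    (hx : x ^ (p ^ e * m) = 0) :
    finrank F (AdjoinRoot ((X - C x) ^ (p ^ e * m)) ⧸
      Ideal.span {root ((X - C x) ^ (p ^ e * m)) ^ (p ^ e + 1)}) =
      p ^ e * finrank F A + finrank F (A ⧸ Ideal.span {x ^ (p ^ e * (m - 1))}) := by
  set c : A := m * (-x ^ p ^ e) ^ (m - 1) with hc
  have hpair : Ideal.span {(X - C x) ^ (p ^ e * m), X ^ (p ^ e + 1)} =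
      Ideal.span {X ^ (p ^ e + 1), C c * X ^ p ^ e} := by
    obtain ⟨Q, hQ⟩ := X_pow_succ_dvd_X_sub_C_pow_sub hx
    rw [Ideal.span_pair_comm, sub_eq_iff_eq_add'.1 hQ, mul_comm _ Q, Ideal.span_pair_add_mul_left]
  have hunit : IsUnit ((m : A) * (-1) ^ (m - 1)) :=
    ((CharP.isUnit_natCast_iff (Fact.out : p.Prime)).2 hm).mul (isUnit_one.neg.pow _)
  have hspan : Ideal.span {c} = Ideal.span {x ^ (p ^ e * (m - 1))} := by
    rw [hc, neg_pow, ← pow_mul, ← mul_assoc, Ideal.span_singleton_mul_left_unit hunit]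
  rw [← AdjoinRoot.mk_X, ← map_pow, finrank_adjoinRoot_quotient_mk, hpair,
    finrank_quotient_span_X_pow_succ_pair, hspan]

end PrimePower

section KroneckerSquare

variable (F : Type*) [Field F] {p : ℕ} [CharP F p] {r : ℕ}

lemma TruncPoly.charP (hr : r ≠ 0) : CharP (TruncPoly F r) p :=
  have := TruncPoly.nontrivial F hr
  charP_of_injective_algebraMap (algebraMap F (TruncPoly F r)).injective p

lemma nullity_jordanBlock_kronecker_self_sub_one_pow_pPart (hp : p.Prime) (hr : r ≠ 0) :
    nullity ((jordanBlock F r ⊗ₖ jordanBlock F r - 1) ^ pPart p r) = pPart p r * r := by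
  have : Fact p.Prime := ⟨hp⟩
  have := TruncPoly.charP F (p := p) hr
  have hfactor : p ^ r.factorization p * (r / p ^ r.factorization p) = r :=
    Nat.ordProj_mul_ordCompl_eq_self r p
  have hx : root (X ^ r : F[X]) ^ (p ^ r.factorization p * (r / p ^ r.factorization p)) = 0 := by
    rw [hfactor, TruncPoly.root_pow]
  have h := finrank_adjoinRoot_quotient_root_pow (F := F) hx
  rwa [hfactor, TruncPoly.finrank_eq, ← nullity_jordanBlock_kronecker_sub_one_pow F hr] at h

lemma pPart_add_nullity_jordanBlock_kronecker_self_sub_one_pow (hp : p.Prime) (hr : r ≠ 0) :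
    pPart p r + nullity ((jordanBlock F r ⊗ₖ jordanBlock F r - 1) ^ (pPart p r + 1)) =
      (pPart p r + 1) * r := by
  have : Fact p.Prime := ⟨hp⟩
  have := TruncPoly.charP F (p := p) hr
  have hfactor : p ^ r.factorization p * (r / p ^ r.factorization p) = r :=
    Nat.ordProj_mul_ordCompl_eq_self r p
  have hx : root (X ^ r : F[X]) ^ (p ^ r.factorization p * (r / p ^ r.factorization p)) = 0 := by
    rw [hfactor, TruncPoly.root_pow]
  have h := finrank_adjoinRoot_quotient_root_pow_succ (F := F) (Nat.not_dvd_ordCompl hp hr) hx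
  rw [hfactor, Nat.mul_sub_one, hfactor, TruncPoly.finrank_quotient_root_pow,
    min_eq_left (Nat.sub_le _ _), TruncPoly.finrank_eq,
    ← nullity_jordanBlock_kronecker_sub_one_pow F hr] at h
  have hle := Nat.ordProj_le p hr
  rw [pPart, h, add_one_mul]
  omega

end KroneckerSquare

section SumMin

variable {ι : Type*} [Fintype ι] {d : ι → ℕ} {k : ℕ}

lemma le_of_sum_min_eq (h : ∑ i, min k (d i) = k * Fintype.card ι) (i : ι) : k ≤ d i := by
  have hsum : ∑ i, min k (d i) = ∑ _ : ι, k := by simp [h, mul_comm]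
  exact min_eq_left_iff.1
    ((Finset.sum_eq_sum_iff_of_le fun i _ => min_le_left k (d i)).1 hsum i (Finset.mem_univ i))

lemma card_filter_eq_add_sum_min (h : ∀ i, k ≤ d i) :
    (Finset.univ.filter fun i => d i = k).card + ∑ i, min (k + 1) (d i) =
      (k + 1) * Fintype.card ι := by
  rw [Finset.card_filter, ← Finset.sum_add_distrib, mul_comm, ← smul_eq_mul, ← Finset.card_univ,
    ← Finset.sum_const]
  refine Finset.sum_congr rfl fun i _ => ?_
  have := h i
  split_ifs <;> omega

end SumMin

/-- The smallest part of `λ(r, r, p)` is the `p`-part `r_p` of `r`, and it occurs with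
multiplicity `r_p`. -/
theorem stmt_16 {F : Type*} [Field F] (p : ℕ) (hp : p.Prime) [CharP F p]
    (r : ℕ) (hr : 0 < r)
    (lam : Fin r → ℕ) (hanti : Antitone lam) (hpos : ∀ i, 0 < lam i)
    (hsim : MatSimilar F (jordanBlock F r ⊗ₖ jordanBlock F r) (jordanBlockDiag F lam)) :
    lam ⟨r - 1, by omega⟩ = pPart p r ∧
    (Finset.univ.filter fun i => lam i = pPart p r).card = pPart p r := by
  have hnullity (j : ℕ) :
      nullity ((jordanBlock F r ⊗ₖ jordanBlock F r - 1) ^ j) = ∑ i, min j (lam i) :=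
    (hsim.nullity_sub_one_pow j).trans (nullity_jordanBlockDiag_sub_one_pow F lam j)
  have hle : ∀ i, pPart p r ≤ lam i := by
    refine le_of_sum_min_eq ?_
    rw [← hnullity, nullity_jordanBlock_kronecker_self_sub_one_pow_pPart F hp hr.ne',
      Fintype.card_fin]
  have hcard : (Finset.univ.filter fun i => lam i = pPart p r).card = pPart p r := by
    refine Nat.add_right_cancel ((card_filter_eq_add_sum_min hle).trans ?_)
    rw [← hnullity, pPart_add_nullity_jordanBlock_kronecker_self_sub_one_pow F hp hr.ne',
      Fintype.card_fin]
  have hpPart_pos : 0 < pPart p r := pow_pos hp.pos _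
  obtain ⟨i, hi⟩ := Finset.card_pos.1 (hpPart_pos.trans_eq hcard.symm)
  refine ⟨le_antisymm ?_ (hle _), hcard⟩
  exact (hanti (Nat.le_sub_one_of_lt i.2)).trans_eq (Finset.mem_filter.1 hi).2
end

section
/- Let F be a field of characteristic 2 and let r be a positive integer with consecutive-ones binary expansion r = Σ_{i=1}^k (−1)^{i−1} 2^{e_i}, where e_1 > ⋯ > e_k ≥ 0 and e_{k−1} > e_k + 1 if k ≥ 2, and let r_j = Σ_{i=j+1}^k (−1)^{i−j−1} 2^{e_i} for 0 ≤ j ≤ k. Then the Kronecker product J_r ⊗ J_r is similar over F to the block-diagonal matrix consisting, for each 1 ≤ i ≤ k, of exactly 2^{e_i} − 2·r_i blocks equal to J_{2^{e_i}} (all these block counts being nonnegative). In particular, every block size occurring in the Jordan form of J_r ⊗ J_r in characteristic 2 is a power of 2. -/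
/-!
Put `N = J_a ⊗ J_b - 1` in characteristic `p`. Extension by zero identifies `F ^ a ⊗ F ^ b` with
the arrays on `ℕ × ℕ` supported in an `a × b` box, that is with `ker X ^ a ⊓ ker Y ^ b` for the
two commuting shifts `X` and `Y`, and `N` becomes `X + Y + X Y`. So
`N ^ q = X ^ q + Y ^ q + X ^ q Y ^ q` for every power `q` of `p`. Let `K a b m` be the dimension of
`ker X ^ a ⊓ ker Y ^ b ⊓ ker N ^ m`.

* `K a q m = a m` for `a, m ≤ q`: the bound `≤` is an induction on `a`, and it also bounds the image
  of `N ^ m`, which lies in `ker N ^ (q - m)`.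
* Hence `X ^ (q - a)` maps `ker X ^ q ⊓ ker Y ^ q ⊓ ker N ^ m` onto
  `ker X ^ a ⊓ ker Y ^ q ⊓ ker N ^ m`, and likewise for `Y`. Rank-nullity turns this into the
  reflection formula `K r r m + (q - r) m = K (q - r) (q - r) m + r m` for `r, m ≤ q`; larger `m`
  are reduced to `m = q` by `N ^ q = 0`.
* Since `r_j + r_(j+1) = p ^ e_j`, with `j` counted from `0`, iterating the reflection gives
  `K r r m = ∑ j, (p ^ e_j - 2 r_(j+1)) min (p ^ e_j) m`, which is the kernel dimension for the
  claimed Jordan form. Kernel dimensions determine the Jordan type of a nilpotent operator, because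
  the second differences of `m ↦ ∑ i, min (d i) m` count the blocks of each size.
-/

open Kronecker

/-- The partial sum `r_j = Σ_{i=j+1}^k (−1)^{i−j−1} 2^{e_i}` (0-indexed: sum over `i ≥ j`)
associated with the consecutive-ones binary expansion given by exponents `e`. -/
def coPartial (k : ℕ) (e : Fin k → ℕ) (j : ℕ) : ℤ :=
  ∑ i ∈ Finset.univ.filter (fun i : Fin k => j ≤ (i : ℕ)),
    (-1) ^ ((i : ℕ) - j) * 2 ^ (e i)

open LinearMap (ker range)
open Module Function

/-! ### Kernels of the circle operation -/

section Circle

/-- The circle operation on a ring: `1 + circ x y = (1 + x) * (1 + y)`. When `1 + X` and `1 + Y` act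
as `J_a ⊗ 1` and `1 ⊗ J_b`, the operator `circ X Y` is `J_a ⊗ J_b - 1`. -/
def circ {A : Type*} [Semiring A] (x y : A) : A :=
  x + y + x * y

variable {A : Type*}

theorem circ_comm [Semiring A] {x y : A} (h : Commute x y) : circ x y = circ y x := by
  rw [circ, circ, h.eq, add_comm x]

theorem commute_circ [Semiring A] {x y z : A} (hx : Commute z x) (hy : Commute z y) :
    Commute z (circ x y) :=
  (hx.add_right hy).add_right (hx.mul_right hy)

theorem circ_pow_char_pow (F : Type*) [Field F] (p : ℕ) [Fact p.Prime] [CharP F p] [Ring A]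
    [Algebra F A] {x y : A} (h : Commute x y) (n : ℕ) :
    circ x y ^ p ^ n = circ (x ^ p ^ n) (y ^ p ^ n) := by
  rcases subsingleton_or_nontrivial A with _ | _
  · exact Subsingleton.elim _ _
  · have : CharP A p := charP_of_injective_algebraMap (algebraMap F A).injective p
    have hxy : Commute (x + y) (x * y) :=
      ((Commute.refl x).mul_right h).add_left (h.symm.mul_right (Commute.refl y))
    rw [circ, add_pow_char_pow_of_commute p n hxy, add_pow_char_pow_of_commute p n h, h.mul_pow,
      circ]

end Circle

section ShiftPair

variable {F V W : Type*} [Field F] [AddCommGroup V] [Module F V] [AddCommGroup W] [Module F W]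

theorem finrank_map_add_finrank_ker_inf (f : V →ₗ[F] W) (S : Submodule F V)
    [FiniteDimensional F S] :
    finrank F (S.map f) + finrank F ↥(ker f ⊓ S) = finrank F S := by
  rw [← LinearMap.finrank_range_add_finrank_ker (f.domRestrict S), LinearMap.range_domRestrict,
    LinearMap.ker_domRestrict, ← Submodule.finrank_map_subtype_eq, Submodule.map_comap_subtype,
    inf_comm]

/-- The kernel of `circ X Y ^ m` on the subspace where `X ^ a = 0` and `Y ^ b = 0`. -/
def circKer (X Y : End F V) (a b m : ℕ) : Submodule F V :=
  ker (X ^ a) ⊓ ker (Y ^ b) ⊓ ker (circ X Y ^ m)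

/-- A commuting pair of operators behaving like the two shifts of arrays indexed by `ℕ × ℕ`: the
common kernel of `X ^ a` and `Y ^ b` has the dimension of the space of `a × b` arrays. -/
structure IsShiftPair (X Y : End F V) : Prop where
  commute : Commute X Y
  finite_ker_inf_ker (a b : ℕ) : FiniteDimensional F ↥(ker (X ^ a) ⊓ ker (Y ^ b))
  finrank_ker_inf_ker (a b : ℕ) : finrank F ↥(ker (X ^ a) ⊓ ker (Y ^ b)) = a * b

variable {X Y : End F V}

theorem mem_circKer {a b m : ℕ} {v : V} :
    v ∈ circKer X Y a b m ↔ (X ^ a) v = 0 ∧ (Y ^ b) v = 0 ∧ (circ X Y ^ m) v = 0 := by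
  simp only [circKer, Submodule.mem_inf, LinearMap.mem_ker, and_assoc]

theorem circKer_comm (h : Commute X Y) (a b m : ℕ) : circKer X Y a b m = circKer Y X b a m := by
  rw [circKer, circKer, circ_comm h, inf_comm (ker (X ^ a))]

theorem circKer_zero_left (b m : ℕ) : circKer X Y 0 b m = ⊥ :=
  eq_bot_iff.2 fun _ hv => (mem_circKer.1 hv).1

theorem ker_pow_left_inf_circKer {s a : ℕ} (hs : s ≤ a) (b m : ℕ) :
    ker (X ^ s) ⊓ circKer X Y a b m = circKer X Y s b m := by
  have : ker (X ^ s) ≤ ker (X ^ a) := X.iterateKer.monotone hs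
  rw [circKer, circKer, ← inf_assoc, ← inf_assoc, inf_eq_left.2 this]

theorem ker_circ_pow_inf_circKer {s m : ℕ} (a b : ℕ) (hs : s ≤ m) :
    ker (circ X Y ^ s) ⊓ circKer X Y a b m = circKer X Y a b s := by
  have : ker (circ X Y ^ s) ≤ ker (circ X Y ^ m) := (circ X Y).iterateKer.monotone hs
  rw [circKer, circKer, inf_left_comm, inf_eq_left.2 this]

theorem apply_apply_eq_zero_of_commute {A B : End F V} (h : Commute A B) {v : V} (hv : A v = 0) :
    A (B v) = 0 := by
  rw [← Module.End.mul_apply, h.eq, Module.End.mul_apply, hv, map_zero]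

theorem map_pow_left_circKer_le (h : Commute X Y) (s a b m : ℕ) :
    (circKer X Y (a + s) b m).map (X ^ s) ≤ circKer X Y a b m := by
  rintro _ ⟨v, hv, rfl⟩
  obtain ⟨hX, hY, hN⟩ := mem_circKer.1 hv
  have hXN : Commute (circ X Y) X := (commute_circ (Commute.refl X) h).symm
  refine mem_circKer.2 ⟨?_, apply_apply_eq_zero_of_commute (h.symm.pow_pow b s) hY,
    apply_apply_eq_zero_of_commute (hXN.pow_pow m s) hN⟩
  rwa [← Module.End.mul_apply, ← pow_add]

theorem map_circ_pow_circKer_le (h : Commute X Y) (a b m s : ℕ) :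
    (circKer X Y a b (m + s)).map (circ X Y ^ s) ≤ circKer X Y a b m := by
  rintro _ ⟨v, hv, rfl⟩
  obtain ⟨hX, hY, hN⟩ := mem_circKer.1 hv
  have hXN : Commute X (circ X Y) := commute_circ (Commute.refl X) h
  have hYN : Commute Y (circ X Y) := commute_circ h.symm (Commute.refl Y)
  refine mem_circKer.2 ⟨apply_apply_eq_zero_of_commute (hXN.pow_pow a s) hX,
    apply_apply_eq_zero_of_commute (hYN.pow_pow b s) hY, ?_⟩
  rwa [← Module.End.mul_apply, ← pow_add]

theorem circ_pow_apply_of_apply_eq_zero (h : Commute X Y) {v : V} (hv : X v = 0) (m : ℕ) :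
    (circ X Y ^ m) v = (Y ^ m) v := by
  induction m with
  | zero => rfl
  | succ m ih =>
    have hXm : X ((Y ^ m) v) = 0 := apply_apply_eq_zero_of_commute (h.pow_right m) hv
    rw [pow_succ', Module.End.mul_apply, ih, circ_comm h, pow_succ', Module.End.mul_apply]
    simp [circ, hXm]

theorem circKer_one_le (h : Commute X Y) (b m : ℕ) :
    circKer X Y 1 b m ≤ ker (X ^ 1) ⊓ ker (Y ^ m) := by
  intro v hv
  obtain ⟨hX, -, hN⟩ := mem_circKer.1 hv
  rw [pow_one] at hX
  exact ⟨by rwa [pow_one], (circ_pow_apply_of_apply_eq_zero h hX m).symm.trans hN⟩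

theorem circKer_of_char_pow_le (p : ℕ) [Fact p.Prime] [CharP F p] (h : Commute X Y) {n a b m : ℕ}
    (ha : a ≤ p ^ n) (hb : b ≤ p ^ n) (hm : p ^ n ≤ m) :
    circKer X Y a b m = ker (X ^ a) ⊓ ker (Y ^ b) := by
  refine inf_eq_left.2 fun v hv => Module.End.pow_map_zero_of_le hm ?_
  have hX : (X ^ p ^ n) v = 0 := Module.End.pow_map_zero_of_le ha hv.1
  have hY : (Y ^ p ^ n) v = 0 := Module.End.pow_map_zero_of_le hb hv.2
  rw [circ_pow_char_pow F p h]
  simp [circ, hX, hY]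

theorem circKer_min_char_pow (p : ℕ) [Fact p.Prime] [CharP F p] (h : Commute X Y) {n a b : ℕ}
    (ha : a ≤ p ^ n) (hb : b ≤ p ^ n) (m : ℕ) :
    circKer X Y a b (min (p ^ n) m) = circKer X Y a b m := by
  rcases le_total m (p ^ n) with hm | hm
  · rw [min_eq_right hm]
  · rw [min_eq_left hm, circKer_of_char_pow_le p h ha hb le_rfl,
      circKer_of_char_pow_le p h ha hb hm]

namespace IsShiftPair

theorem symm (h : IsShiftPair X Y) : IsShiftPair Y X where
  commute := h.commute.symm
  finite_ker_inf_ker a b := inf_comm (ker (X ^ b)) (ker (Y ^ a)) ▸ h.finite_ker_inf_ker b a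
  finrank_ker_inf_ker a b := by rw [inf_comm, h.finrank_ker_inf_ker, mul_comm]

theorem finiteDimensional_circKer (h : IsShiftPair X Y) (a b m : ℕ) :
    FiniteDimensional F (circKer X Y a b m) :=
  have := h.finite_ker_inf_ker a b
  Submodule.finiteDimensional_of_le inf_le_left

theorem finrank_circKer_le (h : IsShiftPair X Y) (a b m : ℕ) :
    finrank F (circKer X Y a b m) ≤ a * m := by
  induction a with
  | zero => rw [circKer_zero_left, finrank_bot, zero_mul]
  | succ a ih =>
    have := h.finite_ker_inf_ker 1 m
    have := h.finiteDimensional_circKer a b m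
    have := h.finiteDimensional_circKer (a + 1) b m
    have h_image := Submodule.finrank_mono (map_pow_left_circKer_le h.commute 1 a b m)
    have h_kernel := Submodule.finrank_mono (circKer_one_le h.commute b m)
    have h_rank := finrank_map_add_finrank_ker_inf (X ^ 1) (circKer X Y (a + 1) b m)
    rw [ker_pow_left_inf_circKer (by omega)] at h_rank
    rw [h.finrank_ker_inf_ker] at h_kernel
    linarith

section CharP

variable (p : ℕ) [Fact p.Prime] [CharP F p] {n : ℕ}

/-- The upper bound `finrank_circKer_le` also bounds the image of `circ X Y ^ m`, which lies in the
kernel of the complementary power, so both bounds are attained. -/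
theorem finrank_circKer_char_pow (h : IsShiftPair X Y) {a m : ℕ} (ha : a ≤ p ^ n)
    (hm : m ≤ p ^ n) : finrank F (circKer X Y a (p ^ n) m) = a * m := by
  obtain ⟨m', hm'⟩ := Nat.exists_eq_add_of_le' hm
  have := h.finiteDimensional_circKer a (p ^ n) m'
  have := h.finiteDimensional_circKer a (p ^ n) (m' + m)
  have h_total : finrank F (circKer X Y a (p ^ n) (m' + m)) = a * m' + a * m := by
    rw [circKer_of_char_pow_le p h.commute ha le_rfl hm'.le, h.finrank_ker_inf_ker, hm', mul_add]
  have h_image := (Submodule.finrank_mono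
    (map_circ_pow_circKer_le h.commute a (p ^ n) m' m)).trans (h.finrank_circKer_le a (p ^ n) m')
  have h_kernel := h.finrank_circKer_le a (p ^ n) m
  have h_rank :=
    finrank_map_add_finrank_ker_inf (circ X Y ^ m) (circKer X Y a (p ^ n) (m' + m))
  rw [ker_circ_pow_inf_circKer _ _ (by omega)] at h_rank
  omega

theorem map_pow_left_circKer (h : IsShiftPair X Y) {a a' m : ℕ} (ha : a + a' = p ^ n)
    (hm : m ≤ p ^ n) :
    (circKer X Y (p ^ n) (p ^ n) m).map (X ^ a') = circKer X Y a (p ^ n) m := by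
  have := h.finiteDimensional_circKer a (p ^ n) m
  have := h.finiteDimensional_circKer (p ^ n) (p ^ n) m
  refine Submodule.eq_of_le_of_finrank_eq ?_ ?_
  · simpa only [ha] using map_pow_left_circKer_le h.commute a' a (p ^ n) m
  · have h_rank := finrank_map_add_finrank_ker_inf (X ^ a') (circKer X Y (p ^ n) (p ^ n) m)
    rw [ker_pow_left_inf_circKer (by omega), h.finrank_circKer_char_pow p (by omega) hm,
      h.finrank_circKer_char_pow p le_rfl hm] at h_rank
    rw [h.finrank_circKer_char_pow p (by omega) hm]
    have : a * m + a' * m = p ^ n * m := by rw [← ha, add_mul]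
    omega

theorem map_pow_right_circKer (h : IsShiftPair X Y) {b b' m : ℕ} (hb : b + b' = p ^ n)
    (hm : m ≤ p ^ n) :
    (circKer X Y (p ^ n) (p ^ n) m).map (Y ^ b') = circKer X Y (p ^ n) b m := by
  simpa only [circKer_comm h.commute] using h.symm.map_pow_left_circKer p hb hm

/-- Compare rank-nullity for `X ^ a` on `circKer X Y q b m` and for `Y ^ b'` on
`circKer X Y a' q m`, where `q = p ^ n`: both images are that of `X ^ a * Y ^ b'` on
`circKer X Y q q m`. -/
theorem finrank_circKer_reflect (h : IsShiftPair X Y) {a a' b b' m : ℕ} (ha : a + a' = p ^ n)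
    (hb : b + b' = p ^ n) (hm : m ≤ p ^ n) :
    finrank F (circKer X Y a b m) + a' * m = finrank F (circKer X Y a' b' m) + b * m := by
  have := h.finiteDimensional_circKer (p ^ n) b m
  have := h.finiteDimensional_circKer a' (p ^ n) m
  have h_image : (circKer X Y (p ^ n) b m).map (X ^ a) =
      (circKer X Y a' (p ^ n) m).map (Y ^ b') := by
    rw [← h.map_pow_right_circKer p hb hm,
      ← h.map_pow_left_circKer p ((add_comm a' a).trans ha) hm,
      ← Submodule.map_comp, ← Submodule.map_comp]
    exact congrArg (Submodule.map · _) (h.commute.pow_pow a b').eq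
  have h_rankX := finrank_map_add_finrank_ker_inf (X ^ a) (circKer X Y (p ^ n) b m)
  have h_rankY := finrank_map_add_finrank_ker_inf (Y ^ b') (circKer X Y a' (p ^ n) m)
  rw [ker_pow_left_inf_circKer (by omega), circKer_comm h.commute (p ^ n),
    h.symm.finrank_circKer_char_pow p (by omega) hm] at h_rankX
  rw [circKer_comm h.commute a' (p ^ n), ker_pow_left_inf_circKer (by omega),
    circKer_comm h.commute.symm b', ← circKer_comm h.commute a',
    h.finrank_circKer_char_pow p (by omega) hm, ← h_image, circKer_comm h.commute (p ^ n)]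
    at h_rankY
  omega

/-- Iterating the reflection `r i = p ^ e i - r (i + 1)` down to `0`. -/
theorem finrank_circKer_alternating (h : IsShiftPair X Y) {k : ℕ} {e c : Fin k → ℕ}
    {r : Fin (k + 1) → ℕ} (he : Antitone e) (hlast : r (Fin.last k) = 0)
    (hr : ∀ i, r i.castSucc + r i.succ = p ^ e i) (hc : ∀ i, c i + 2 * r i.succ = p ^ e i)
    (m : ℕ) :
    finrank F (circKer X Y (r 0) (r 0) m) = ∑ i, c i * min (p ^ e i) m := by
  induction k generalizing m with
  | zero => rw [show r 0 = 0 from hlast, circKer_zero_left, finrank_bot, Fin.sum_univ_zero]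
  | succ k ih =>
    have hp : 1 ≤ p := NeZero.one_le
    have h_tail (i : Fin k) :
        min (p ^ e i.succ) (min (p ^ e 0) m) = min (p ^ e i.succ) m := by
      rw [← min_assoc, min_eq_left (Nat.pow_le_pow_right hp (he (Fin.zero_le _)))]
    have h0 : r 0 + r (Fin.succ 0) = p ^ e 0 := hr 0
    have hc0 : c 0 + 2 * r (Fin.succ 0) = p ^ e 0 := hc 0
    have h_reflect := h.finrank_circKer_reflect p h0 h0 (min_le_left _ m)
    have h_ih := ih (e := e ∘ Fin.succ) (c := c ∘ Fin.succ) (r := r ∘ Fin.succ)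
      (he.comp_monotone Fin.strictMono_succ.monotone) hlast (fun i => hr i.succ)
      (fun i => hc i.succ) (min (p ^ e 0) m)
    simp only [Function.comp_apply, h_tail] at h_ih
    rw [circKer_min_char_pow p h.commute (by omega) (by omega), h_ih] at h_reflect
    have h_mul : r 0 * min (p ^ e 0) m =
        c 0 * min (p ^ e 0) m + r (Fin.succ 0) * min (p ^ e 0) m := by
      rw [← add_mul, show r 0 = c 0 + r (Fin.succ 0) by omega]
    rw [Fin.sum_univ_succ]
    omega

end CharP

end IsShiftPair

end ShiftPair

/-! ### Kronecker products as operators on arrays -/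

section Semiconj

variable {F V W : Type*} [Field F] [AddCommGroup V] [Module F V] [AddCommGroup W] [Module F W]
  {A : End F V} {B : End F W}

theorem finrank_ker_pow_eq_finrank_range_inf {f : V →ₗ[F] W} (hf : Injective f)
    (h : Semiconj f A B) (m : ℕ) :
    finrank F (ker (A ^ m)) = finrank F ↥(range f ⊓ ker (B ^ m)) := by
  have h_comap : ker (A ^ m) = (ker (B ^ m)).comap f := by
    ext v
    rw [Submodule.mem_comap, LinearMap.mem_ker, LinearMap.mem_ker, Module.End.pow_apply,
      Module.End.pow_apply, ← h.iterate_right m v, map_eq_zero_iff f hf]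
  rw [(Submodule.equivMapOfInjective f hf _).finrank_eq, h_comap, Submodule.map_comap_eq]

theorem finrank_ker_pow_eq_of_semiconj {f : V ≃ₗ[F] W} (h : Semiconj f A B) (m : ℕ) :
    finrank F (ker (A ^ m)) = finrank F (ker (B ^ m)) := by
  rw [finrank_ker_pow_eq_finrank_range_inf (f := f.toLinearMap) f.injective h, f.range, top_inf_eq]

end Semiconj

section ExtendByZero

variable {F S T : Type*} [Field F] {s : S → T}

theorem mem_range_extendByZero (hs : Injective s) {f : T → F} :
    f ∈ range (ExtendByZero.linearMap F s) ↔ ∀ y ∉ Set.range s, f y = 0 := by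
  constructor
  · rintro ⟨v, rfl⟩ y hy
    exact extend_apply' v (0 : T → F) y hy
  · refine fun hf => ⟨f ∘ s, funext fun y => ?_⟩
    by_cases hy : y ∈ Set.range s
    · obtain ⟨x, rfl⟩ := hy
      exact hs.extend_apply (f ∘ s) (0 : T → F) x
    · exact (extend_apply' (f ∘ s) (0 : T → F) y hy).trans (hf y hy).symm

theorem finrank_range_extendByZero [Fintype S] (hs : Injective s) :
    finrank F (range (ExtendByZero.linearMap F s)) = Fintype.card S := by
  rw [LinearMap.finrank_range_of_inj (extend_injective hs (0 : T → F)), finrank_fintype_fun_eq_card]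

end ExtendByZero

section Grid

variable (F : Type*) [Field F]

/-- The shift `(X f) (i, j) = f (i + 1, j)` of arrays indexed by `ℕ × ℕ`. -/
def shiftX : End F (ℕ × ℕ → F) :=
  LinearMap.funLeft F F fun p => (p.1 + 1, p.2)

/-- The shift `(Y f) (i, j) = f (i, j + 1)` of arrays indexed by `ℕ × ℕ`. -/
def shiftY : End F (ℕ × ℕ → F) :=
  LinearMap.funLeft F F fun p => (p.1, p.2 + 1)

/-- Extension by zero of an `a × b` array to an array indexed by `ℕ × ℕ`. -/
noncomputable def boxIncl (a b : ℕ) : (Fin a × Fin b → F) →ₗ[F] (ℕ × ℕ → F) :=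
  ExtendByZero.linearMap F (Prod.map Fin.val Fin.val)

variable {F}

theorem shiftX_pow_apply (a : ℕ) (f : ℕ × ℕ → F) (i j : ℕ) :
    (shiftX F ^ a) f (i, j) = f (i + a, j) := by
  induction a generalizing f with
  | zero => rfl
  | succ a ih => rw [pow_succ, Module.End.mul_apply, ih]; rfl

theorem shiftY_pow_apply (b : ℕ) (f : ℕ × ℕ → F) (i j : ℕ) :
    (shiftY F ^ b) f (i, j) = f (i, j + b) := by
  induction b generalizing f with
  | zero => rfl
  | succ b ih => rw [pow_succ, Module.End.mul_apply, ih]; rfl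

theorem prodMap_val_injective (a b : ℕ) :
    Injective (Prod.map Fin.val Fin.val : Fin a × Fin b → ℕ × ℕ) :=
  Fin.val_injective.prodMap Fin.val_injective

theorem boxIncl_injective (a b : ℕ) : Injective (boxIncl F a b) :=
  extend_injective (prodMap_val_injective a b) (0 : ℕ × ℕ → F)

theorem boxIncl_apply_val {a b : ℕ} (v : Fin a × Fin b → F) (i : Fin a) (j : Fin b) :
    boxIncl F a b v (i, j) = v (i, j) :=
  (prodMap_val_injective a b).extend_apply v 0 (i, j)

theorem range_boxIncl (a b : ℕ) :
    range (boxIncl F a b) = ker (shiftX F ^ a) ⊓ ker (shiftY F ^ b) := by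
  ext f
  rw [boxIncl, mem_range_extendByZero (prodMap_val_injective a b), Set.range_prodMap,
    Fin.range_val, Fin.range_val, Submodule.mem_inf, LinearMap.mem_ker, LinearMap.mem_ker,
    funext_iff, funext_iff]
  simp only [Prod.forall, shiftX_pow_apply, shiftY_pow_apply, Set.mem_prod, Set.mem_Iio]
  constructor
  · exact fun h => ⟨fun i j => h _ _ (by omega), fun i j => h _ _ (by omega)⟩
  · rintro ⟨hX, hY⟩ i j hij
    rw [not_and_or, not_lt, not_lt] at hij
    rcases hij with hi | hj
    · rw [← Nat.sub_add_cancel hi, hX, Pi.zero_apply]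
    · rw [← Nat.sub_add_cancel hj, hY, Pi.zero_apply]

theorem boxIncl_apply_eq_zero {a b : ℕ} (v : Fin a × Fin b → F) {i j : ℕ} (h : a ≤ i ∨ b ≤ j) :
    boxIncl F a b v (i, j) = 0 := by
  refine (mem_range_extendByZero (prodMap_val_injective a b)).1 ⟨v, rfl⟩ (i, j) ?_
  simp only [Set.range_prodMap, Fin.range_val, Set.mem_prod, Set.mem_Iio]
  omega

theorem isShiftPair_shiftX_shiftY : IsShiftPair (shiftX F) (shiftY F) where
  commute := rfl
  finite_ker_inf_ker a b := range_boxIncl (F := F) a b ▸ inferInstance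
  finrank_ker_inf_ker a b := by
    rw [← range_boxIncl, boxIncl, finrank_range_extendByZero (prodMap_val_injective a b),
      Fintype.card_prod, Fintype.card_fin, Fintype.card_fin]

end Grid

section Kronecker

variable {F : Type*} [Field F]

/-- The assumption `w m = 0` makes the last row of `J_m` follow the same formula as the others. -/
theorem sum_jordanBlock {R : Type*} [Semiring R] {m : ℕ} (i : Fin m) {w : ℕ → R} (hw : w m = 0) :
    ∑ j : Fin m, jordanBlock R m i j * w j = w i + w (i + 1) := by
  have h_entry (j : ℕ) : (if j = i ∨ j = i + 1 then 1 else 0) * w j =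
      (if j = i then w j else 0) + if j = i + 1 then w j else 0 := by
    by_cases hj : j = i <;> simp [hj]
  simp only [jordanBlock, Matrix.of_apply]
  rw [Fin.sum_univ_eq_sum_range fun j => (if j = i ∨ j = i + 1 then 1 else 0) * w j]
  simp only [h_entry]
  rw [Finset.sum_add_distrib, Finset.sum_ite_eq', Finset.sum_ite_eq', if_pos (by simp)]
  congr 1
  split_ifs with h_last
  · rfl
  · rw [show (i : ℕ) + 1 = m by simp at h_last; omega, hw]

theorem kronecker_mulVec {R l m n o : Type*} [CommSemiring R] [Fintype m] [Fintype o]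
    (A : Matrix l m R) (B : Matrix n o R) (v : m × o → R) (i : l) (j : n) :
    (A ⊗ₖ B).mulVec v (i, j) = ∑ x, A i x * ∑ y, B j y * v (x, y) := by
  simp only [Matrix.mulVec, dotProduct, Fintype.sum_prod_type, Matrix.kroneckerMap_apply,
    Finset.mul_sum, mul_assoc]

theorem semiconj_boxIncl (a b : ℕ) :
    Semiconj (boxIncl F a b) ((jordanBlock F a ⊗ₖ jordanBlock F b).mulVecLin - 1 : End F _)
      (circ (shiftX F) (shiftY F) : End F _) := by
  intro v
  have h_zero {i j : ℕ} : a ≤ i ∨ b ≤ j → boxIncl F a b v (i, j) = 0 := boxIncl_apply_eq_zero v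
  ext ⟨i, j⟩
  change _ = boxIncl F a b v (i + 1, j) + boxIncl F a b v (i, j + 1) +
    boxIncl F a b v (i + 1, j + 1)
  by_cases hij : i < a ∧ j < b
  · lift i to Fin a using hij.1
    lift j to Fin b using hij.2
    have h_inner (x : Fin a) : ∑ y, jordanBlock F b j y * v (x, y) =
        boxIncl F a b v (x, j) + boxIncl F a b v (x, j + 1) := by
      have h_row :=
        sum_jordanBlock (w := fun y => boxIncl F a b v (x, y)) j (h_zero (.inr le_rfl))
      simpa only [boxIncl_apply_val] using h_row
    have h_outer := sum_jordanBlock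
      (w := fun x => boxIncl F a b v (x, j) + boxIncl F a b v (x, j + 1)) i
      (by rw [h_zero (.inl le_rfl), h_zero (.inl le_rfl), add_zero])
    rw [boxIncl_apply_val, LinearMap.sub_apply, Pi.sub_apply, Matrix.mulVecLin_apply,
      kronecker_mulVec, Module.End.one_apply]
    simp only [h_inner]
    rw [h_outer, ← boxIncl_apply_val v]
    ring
  · rw [boxIncl_apply_eq_zero _ (by omega), h_zero (by omega), h_zero (by omega),
      h_zero (by omega), add_zero, add_zero]

theorem finrank_ker_kronecker_sub_one_pow (a b m : ℕ) :
    finrank F (ker (((jordanBlock F a ⊗ₖ jordanBlock F b).mulVecLin - 1 : End F _) ^ m)) =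
      finrank F (circKer (shiftX F) (shiftY F) a b m) := by
  rw [finrank_ker_pow_eq_finrank_range_inf (boxIncl_injective a b) (semiconj_boxIncl a b),
    range_boxIncl, circKer]

theorem isNilpotent_kronecker_sub_one (p : ℕ) [Fact p.Prime] [CharP F p] (a b : ℕ) :
    IsNilpotent ((jordanBlock F a ⊗ₖ jordanBlock F b).mulVecLin - 1 : End F _) := by
  have hp : 1 < p := Nat.Prime.one_lt Fact.out
  have ha : a ≤ p ^ (a + b) := (Nat.le_add_right a b).trans (Nat.lt_pow_self hp).le
  have hb : b ≤ p ^ (a + b) := (Nat.le_add_left b a).trans (Nat.lt_pow_self hp).le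
  refine ⟨p ^ (a + b), LinearMap.ext fun v => boxIncl_injective a b ?_⟩
  have hv : boxIncl F a b v ∈ circKer (shiftX F) (shiftY F) a b (p ^ (a + b)) := by
    rw [circKer_of_char_pow_le p isShiftPair_shiftX_shiftY.commute ha hb le_rfl, ← range_boxIncl]
    exact ⟨v, rfl⟩
  rw [Module.End.pow_apply, (semiconj_boxIncl a b).iterate_right _ v, ← Module.End.pow_apply,
    (mem_circKer.1 hv).2.2, LinearMap.zero_apply, map_zero]

end Kronecker

/-! ### Nilpotent Jordan types -/

section BlockShift

variable (F : Type*) [Field F] {ι : Type*} (d : ι → ℕ)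

/-- The nilpotent Jordan matrix with blocks of sizes `d i`, as an operator: in each block the
coordinates are shifted by one position and the last one is replaced by zero. -/
def blockShift : End F (((i : ι) × Fin (d i)) → F) where
  toFun f x := if h : (x.2 : ℕ) + 1 < d x.1 then f ⟨x.1, ⟨x.2 + 1, h⟩⟩ else 0
  map_add' f g := by ext x; by_cases h : (x.2 : ℕ) + 1 < d x.1 <;> simp [h]
  map_smul' c f := by ext x; by_cases h : (x.2 : ℕ) + 1 < d x.1 <;> simp [h]

variable {F d}

theorem blockShift_apply (f : ((i : ι) × Fin (d i)) → F) (x : (i : ι) × Fin (d i)) :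
    blockShift F d f x = if h : (x.2 : ℕ) + 1 < d x.1 then f ⟨x.1, ⟨x.2 + 1, h⟩⟩ else 0 :=
  rfl

theorem blockShift_pow_apply (m : ℕ) (f : ((i : ι) × Fin (d i)) → F) (x : (i : ι) × Fin (d i)) :
    (blockShift F d ^ m) f x =
      if h : (x.2 : ℕ) + m < d x.1 then f ⟨x.1, ⟨x.2 + m, h⟩⟩ else 0 := by
  induction m generalizing x with
  | zero => simp
  | succ m ih =>
    rw [pow_succ', Module.End.mul_apply, blockShift_apply]
    by_cases h : (x.2 : ℕ) + 1 < d x.1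
    · rw [dif_pos h, ih]
      simp only [add_assoc, add_comm 1 m]
    · rw [dif_neg h, dif_neg (by omega)]

theorem ker_blockShift_pow (m : ℕ) :
    ker (blockShift F d ^ m) = range (ExtendByZero.linearMap F
      (Subtype.val : {x : (i : ι) × Fin (d i) // (x.2 : ℕ) < m} → (i : ι) × Fin (d i))) := by
  ext f
  rw [mem_range_extendByZero Subtype.val_injective, LinearMap.mem_ker, funext_iff]
  simp only [blockShift_pow_apply, Subtype.range_coe_subtype, Set.mem_ofPred_eq, not_lt,
    Pi.zero_apply]
  constructor
  · rintro h ⟨i, j⟩ hj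
    simpa [Nat.sub_add_cancel hj] using h ⟨i, ⟨j - m, by omega⟩⟩
  · intro h x
    split_ifs with hx
    · exact h _ (Nat.le_add_left m x.2)
    · rfl

theorem finrank_ker_blockShift_pow [Fintype ι] (m : ℕ) :
    finrank F (ker (blockShift F d ^ m)) = ∑ i, min (d i) m := by
  classical
  rw [ker_blockShift_pow, finrank_range_extendByZero Subtype.val_injective, Fintype.card_subtype,
    Finset.card_filter, Fintype.sum_sigma]
  refine Finset.sum_congr rfl fun i _ => ?_
  rw [← Finset.card_filter, Fin.card_filter_val_lt]

theorem mulVec_jordanBlockDiag {ι : Type} [Fintype ι] [DecidableEq ι] {d : ι → ℕ}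
    (f : ((i : ι) × Fin (d i)) → F) :
    (jordanBlockDiag F d).mulVec f = f + blockShift F d f := by
  ext ⟨i, a⟩
  have h_block := sum_jordanBlock (w := fun j => if h : j < d i then f ⟨i, ⟨j, h⟩⟩ else 0) a
    (dif_neg (lt_irrefl _))
  rw [Pi.add_apply, blockShift_apply, Matrix.mulVec, dotProduct, Fintype.sum_sigma,
    Fintype.sum_eq_single i]
  · simpa [jordanBlockDiag, Matrix.blockDiagonal'_apply] using h_block
  · intro j hj
    refine Finset.sum_eq_zero fun b _ => ?_
    rw [jordanBlockDiag, Matrix.blockDiagonal'_apply, dif_neg hj.symm, zero_mul]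

end BlockShift

section HasJordanType

variable {F V : Type*} [Field F] [AddCommGroup V] [Module F V] {N : End F V}

/-- `N` is nilpotent with Jordan blocks of sizes `d i`; blocks of size `0` are allowed and
contribute nothing. -/
def HasJordanType {ι : Type*} (N : End F V) (d : ι → ℕ) : Prop :=
  ∃ e : V ≃ₗ[F] (((i : ι) × Fin (d i)) → F), Semiconj e N (blockShift F d)

theorem matSimilar_jordanBlockDiag_iff {n : Type*} {ι : Type} [Fintype n] [Fintype ι]
    [DecidableEq ι] {A : Matrix n n F} {d : ι → ℕ} :
    MatSimilar F A (jordanBlockDiag F d) ↔ HasJordanType (A.mulVecLin - 1 : End F _) d := by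
  refine exists_congr fun e => forall_congr' fun v => ?_
  rw [mulVec_jordanBlockDiag, LinearMap.sub_apply, map_sub, Matrix.mulVecLin_apply,
    Module.End.one_apply, sub_eq_iff_eq_add']

section Existence

open Polynomial

/-- The first `k` coefficients of a polynomial in reversed order, so that multiplication by `X`
becomes the shift of `blockShift`. -/
noncomputable def truncCoeff (F : Type*) [Field F] (k : ℕ) : F[X] →ₗ[F] (Fin k → F) :=
  LinearMap.pi fun j => Polynomial.lcoeff F (k - 1 - j)

theorem ker_truncCoeff (k : ℕ) :
    ker (truncCoeff F k) = (F[X] ∙ (X ^ k : F[X])).restrictScalars F := by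
  ext p
  rw [LinearMap.mem_ker, Submodule.restrictScalars_mem, Ideal.submodule_span_eq,
    Ideal.mem_span_singleton, X_pow_dvd_iff]
  constructor
  · intro h j hj
    simpa [truncCoeff, show k - 1 - (k - 1 - j) = j by omega]
      using congrFun h ⟨k - 1 - j, by omega⟩
  · exact fun h => funext fun j => h _ (by omega)

theorem truncCoeff_surjective (k : ℕ) : Surjective (truncCoeff F k) := by
  refine fun f => ⟨∑ j : Fin k, monomial (k - 1 - j) (f j), funext fun i => ?_⟩
  simp only [truncCoeff, LinearMap.pi_apply, lcoeff_apply, finsetSum_coeff, coeff_monomial]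
  rw [Fintype.sum_eq_single i fun j hj => if_neg (by omega), if_pos rfl]

/-- The identification of `F[X] / (X ^ k)` with `F ^ k` induced by `truncCoeff`. -/
noncomputable def truncEquiv (F : Type*) [Field F] (k : ℕ) :
    (F[X] ⧸ (F[X] ∙ (X ^ k : F[X]))) ≃ₗ[F] (Fin k → F) :=
  (Submodule.Quotient.restrictScalarsEquiv F (F[X] ∙ (X ^ k : F[X]))).symm ≪≫ₗ
    Submodule.quotEquivOfEq _ _ (ker_truncCoeff k).symm ≪≫ₗ
    (truncCoeff F k).quotKerEquivOfSurjective (truncCoeff_surjective k)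

theorem truncEquiv_X_smul {k : ℕ} (w : F[X] ⧸ (F[X] ∙ (X ^ k : F[X]))) (j : Fin k) :
    truncEquiv F k ((X : F[X]) • w) j =
      if h : (j : ℕ) + 1 < k then truncEquiv F k w ⟨j + 1, h⟩ else 0 := by
  obtain ⟨p, rfl⟩ := Submodule.Quotient.mk_surjective _ w
  change (X * p : F[X]).coeff (k - 1 - j) =
    if h : (j : ℕ) + 1 < k then p.coeff (k - 1 - (j + 1)) else 0
  split_ifs with h
  · rw [show k - 1 - j = (k - 1 - (j + 1)) + 1 by omega, coeff_X_mul]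
  · rw [show k - 1 - j = 0 by omega, coeff_X_mul_zero]

theorem isTorsion'_powers_X_of_isNilpotent (hN : IsNilpotent N) :
    Module.IsTorsion' (AEval' N) (Submonoid.powers (X : F[X])) := by
  obtain ⟨n, hn⟩ := hN
  refine fun {v} => ⟨⟨X ^ n, n, rfl⟩, ?_⟩
  obtain ⟨w, rfl⟩ := (AEval'.of N).surjective v
  change (X ^ n : F[X]) • AEval'.of N w = 0
  rw [AEval'.X_pow_smul_of, hn, zero_smul, map_zero]

/-- The structure theorem for the finitely generated torsion `F[X]`-module given by `N`. -/
theorem exists_hasJordanType [FiniteDimensional F V] (hN : IsNilpotent N) :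
    ∃ (b : ℕ) (d : Fin b → ℕ), HasJordanType N d := by
  obtain ⟨b, d, ⟨E⟩⟩ := Module.torsion_by_prime_power_decomposition
    (irreducible_X (R := F)) (isTorsion'_powers_X_of_isNilpotent hN)
  refine ⟨b, d, AEval'.of N ≪≫ₗ (E ≪≫ₗ DirectSum.linearEquivFunOnFintype _ _ _).restrictScalars F
    ≪≫ₗ LinearEquiv.piCongrRight (fun i => truncEquiv F (d i)) ≪≫ₗ
    (LinearEquiv.piCurry F fun (i : Fin b) (_ : Fin (d i)) => F).symm, fun v => ?_⟩
  ext ⟨i, j⟩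
  change truncEquiv F (d i) (E (AEval'.of N (N v)) i) j = _
  rw [← AEval'.X_smul_of, map_smul]
  exact truncEquiv_X_smul (E (AEval'.of N v) i) j

end Existence

section Combinatorics

/-- The second difference of `m ↦ min c m` is minus the indicator function of `c`. -/
theorem card_fiber_succ_add {ι : Type*} [Fintype ι] (d : ι → ℕ) (s : ℕ) :
    Nat.card {i // d i = s + 1} + (∑ i, min (d i) s + ∑ i, min (d i) (s + 2)) =
      2 * ∑ i, min (d i) (s + 1) := by
  rw [Nat.card_eq_fintype_card, Fintype.card_subtype, Finset.card_filter, Finset.mul_sum,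
    ← Finset.sum_add_distrib, ← Finset.sum_add_distrib]
  refine Finset.sum_congr rfl fun i _ => ?_
  split_ifs <;> omega

theorem card_fiber_eq_of_sum_min_eq {ι κ : Type*} [Fintype ι] [Fintype κ] {d : ι → ℕ}
    {d' : κ → ℕ} (h : ∀ m, ∑ i, min (d i) m = ∑ j, min (d' j) m) {s : ℕ} (hs : s ≠ 0) :
    Nat.card {i // d i = s} = Nat.card {j // d' j = s} := by
  obtain ⟨s, rfl⟩ := Nat.exists_eq_add_one_of_ne_zero hs
  have h_left := card_fiber_succ_add d s
  have h_right := card_fiber_succ_add d' s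
  simp only [h] at h_left
  omega

theorem exists_equiv_of_card_fiber_eq {ι κ α : Type*} [Finite ι] [Finite κ] {P : α → Prop}
    {f : ι → α} {g : κ → α}
    (h : ∀ s, P s → Nat.card {i // f i = s} = Nat.card {j // g j = s}) :
    ∃ τ : {i // P (f i)} ≃ {j // P (g j)}, ∀ i, g (τ i) = f i := by
  have h_fiber (s : α) : Nonempty ({i : {i // P (f i)} // f i = s} ≃
      {j : {j // P (g j)} // g j = s}) := by
    by_cases hs : P s
    · exact ⟨(Equiv.subtypeSubtypeEquivSubtype fun hi : f _ = s => hi ▸ hs).trans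
        ((Finite.card_eq.1 (h s hs)).some.trans
          (Equiv.subtypeSubtypeEquivSubtype fun hj : g _ = s => hj ▸ hs).symm)⟩
    · have : IsEmpty {i : {i // P (f i)} // f i = s} := ⟨fun i => hs (i.2 ▸ i.1.2)⟩
      have : IsEmpty {j : {j // P (g j)} // g j = s} := ⟨fun j => hs (j.2 ▸ j.1.2)⟩
      exact ⟨Equiv.equivOfIsEmpty _ _⟩
  exact ⟨_, Equiv.ofFiberEquiv_map (f := fun i : {i // P (f i)} => f i)
    (g := fun j : {j // P (g j)} => g j) fun s => (h_fiber s).some⟩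

theorem sigma_fin_ext {ι : Type*} {d : ι → ℕ} {x y : (i : ι) × Fin (d i)} (h₁ : x.1 = y.1)
    (h₂ : (x.2 : ℕ) = y.2) : x = y :=
  Sigma.ext h₁ ((Fin.heq_ext_iff (congrArg d h₁)).2 h₂)

end Combinatorics

theorem hasJordanType_blockShift {ι κ : Type*} {d : ι → ℕ} {d' : κ → ℕ}
    (τ : {i // d i ≠ 0} ≃ {j // d' j ≠ 0}) (hτ : ∀ i, d' (τ i) = d i) :
    HasJordanType (blockShift F d) d' := by
  have hτ' (j) : d (τ.symm j) = d' j := by rw [← hτ, τ.apply_symm_apply]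
  let σ : ((j : κ) × Fin (d' j)) ≃ ((i : ι) × Fin (d i)) :=
    { toFun := fun y => ⟨(τ.symm ⟨y.1, y.2.pos.ne'⟩).1, Fin.cast (hτ' ⟨y.1, _⟩).symm y.2⟩
      invFun := fun x => ⟨(τ ⟨x.1, x.2.pos.ne'⟩).1, Fin.cast (hτ ⟨x.1, _⟩).symm x.2⟩
      left_inv := fun y => sigma_fin_ext (by simp) (by simp)
      right_inv := fun x => sigma_fin_ext (by simp) (by simp) }
  refine ⟨LinearEquiv.funCongrLeft F F σ, fun f => funext fun y => ?_⟩
  have h_size : d (σ y).1 = d' y.1 := hτ' ⟨y.1, y.2.pos.ne'⟩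
  have h_pos : ((σ y).2 : ℕ) = y.2 := rfl
  rw [blockShift_apply, LinearEquiv.funCongrLeft_apply, LinearMap.funLeft_apply,
    LinearEquiv.funCongrLeft_apply, blockShift_apply]
  by_cases hy : (y.2 : ℕ) + 1 < d' y.1
  · rw [dif_pos (by omega), dif_pos hy, LinearMap.funLeft_apply]
    rfl
  · rw [dif_neg (by omega), dif_neg hy]

namespace HasJordanType

variable {ι κ : Type*} {d : ι → ℕ} {d' : κ → ℕ}

theorem finrank_ker_pow [Fintype ι] (h : HasJordanType N d) (m : ℕ) :
    finrank F (ker (N ^ m)) = ∑ i, min (d i) m := by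
  obtain ⟨e, he⟩ := h
  rw [finrank_ker_pow_eq_of_semiconj he, finrank_ker_blockShift_pow]

theorem card_fiber_eq [Finite ι] [Finite κ] (h : HasJordanType N d) (h' : HasJordanType N d')
    {s : ℕ} (hs : s ≠ 0) : Nat.card {i // d i = s} = Nat.card {j // d' j = s} := by
  cases nonempty_fintype ι
  cases nonempty_fintype κ
  exact card_fiber_eq_of_sum_min_eq
    (fun m => (h.finrank_ker_pow m).symm.trans (h'.finrank_ker_pow m)) hs

theorem exists_size_eq [Finite ι] [Finite κ] (h : HasJordanType N d) (h' : HasJordanType N d')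
    {i : ι} (hi : d i ≠ 0) : ∃ j, d' j = d i := by
  have : Nonempty {i' // d i' = d i} := ⟨i, rfl⟩
  obtain ⟨⟨j, hj⟩⟩ := (Finite.card_pos_iff).1 (h.card_fiber_eq h' hi ▸ Finite.card_pos)
  exact ⟨j, hj⟩

end HasJordanType

theorem hasJordanType_of_finrank_ker_pow [FiniteDimensional F V] (hN : IsNilpotent N) {ι : Type*}
    [Fintype ι] {d : ι → ℕ} (h : ∀ m, finrank F (ker (N ^ m)) = ∑ i, min (d i) m) :
    HasJordanType N d := by
  obtain ⟨b, d', h'⟩ := exists_hasJordanType hN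
  obtain ⟨τ, hτ⟩ := exists_equiv_of_card_fiber_eq (P := (· ≠ 0)) (f := d') (g := d)
    fun _ => card_fiber_eq_of_sum_min_eq fun m => (h'.finrank_ker_pow m).symm.trans (h m)
  obtain ⟨e', he'⟩ := h'
  obtain ⟨e, he⟩ := hasJordanType_blockShift (F := F) τ hτ
  exact ⟨e' ≪≫ₗ e, he.comp_left he'⟩

end HasJordanType

/-! ### Alternating sums of powers and the tensor square -/

section AlternatingSums

/-- The tails `∑ i ≥ j, (-1) ^ (i - j) * b ^ e i` of an alternating sum of powers of `b`, with `i`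
counted from `0`. The partial sums `coPartial` are the case `b = 2`. -/
def altPowSum (b : ℤ) {k : ℕ} (e : Fin k → ℕ) (j : ℕ) : ℤ :=
  ∑ i ∈ Finset.univ.filter (fun i : Fin k => j ≤ (i : ℕ)), (-1) ^ ((i : ℕ) - j) * b ^ e i

variable {b : ℤ} {k : ℕ} {e : Fin k → ℕ}

theorem altPowSum_of_le {j : ℕ} (hj : k ≤ j) : altPowSum b e j = 0 := by
  rw [altPowSum, Finset.filter_false_of_mem fun i _ => by omega, Finset.sum_empty]

theorem altPowSum_add_succ (i : Fin k) :
    altPowSum b e i + altPowSum b e (i + 1) = b ^ e i := by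
  have h_insert : Finset.univ.filter (fun l : Fin k => (i : ℕ) ≤ l) =
      insert i (Finset.univ.filter fun l : Fin k => (i : ℕ) + 1 ≤ l) := by
    ext l
    simp only [Finset.mem_filter, Finset.mem_univ, true_and, Finset.mem_insert, Fin.ext_iff]
    omega
  have h_tail : ∑ l ∈ Finset.univ.filter (fun l : Fin k => (i : ℕ) + 1 ≤ l),
      (-1) ^ ((l : ℕ) - i) * b ^ e l = -altPowSum b e (i + 1) := by
    rw [altPowSum, ← Finset.sum_neg_distrib]
    refine Finset.sum_congr rfl fun l hl => ?_
    have hl : (i : ℕ) + 1 ≤ l := by simpa using hl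
    rw [show (l : ℕ) - i = l - (i + 1) + 1 by omega, pow_succ]
    ring
  rw [altPowSum, h_insert, Finset.sum_insert (by simp), h_tail, Nat.sub_self, pow_zero, one_mul,
    neg_add_cancel_right]

theorem altPowSum_bounds (hb : 2 ≤ b) (he : StrictAnti e) {j : ℕ} (hj : j ≤ k) :
    0 ≤ altPowSum b e j ∧ ∀ i : Fin k, (i : ℕ) + 1 = j → 2 * altPowSum b e j ≤ b ^ e i := by
  induction hj using Nat.decreasingInduction with
  | self =>
    rw [altPowSum_of_le le_rfl]
    exact ⟨le_rfl, fun i _ => by positivity⟩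
  | of_succ j hj ih =>
    have h_two_mul : 2 * altPowSum b e (j + 1) ≤ b ^ e ⟨j, hj⟩ := ih.2 ⟨j, hj⟩ rfl
    have h_add : altPowSum b e j + altPowSum b e (j + 1) = b ^ e ⟨j, hj⟩ :=
      altPowSum_add_succ ⟨j, hj⟩
    refine ⟨by linarith [ih.1], fun i hi => ?_⟩
    have h_lt : e ⟨j, hj⟩ < e i := he (Fin.lt_def.2 (by simp only; omega))
    calc 2 * altPowSum b e j ≤ b * b ^ e ⟨j, hj⟩ :=
          mul_le_mul hb (by linarith [ih.1]) (by linarith [ih.1]) (by linarith)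
      _ = b ^ (e ⟨j, hj⟩ + 1) := (pow_succ' b _).symm
      _ ≤ b ^ e i := pow_le_pow_right₀ (by omega) h_lt

theorem altPowSum_nonneg (hb : 2 ≤ b) (he : StrictAnti e) {j : ℕ} (hj : j ≤ k) :
    0 ≤ altPowSum b e j :=
  (altPowSum_bounds hb he hj).1

theorem two_mul_altPowSum_succ_le (hb : 2 ≤ b) (he : StrictAnti e) (i : Fin k) :
    2 * altPowSum b e (i + 1) ≤ b ^ e i :=
  (altPowSum_bounds hb he i.2).2 i rfl

end AlternatingSums

section TensorSquare

variable {F : Type*} [Field F] {p : ℕ} [Fact p.Prime] [CharP F p] {k : ℕ} {e : Fin k → ℕ}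

theorem hasJordanType_kronecker_self {c : Fin k → ℕ} {r : Fin (k + 1) → ℕ} (he : Antitone e)
    (hlast : r (Fin.last k) = 0) (hr : ∀ i, r i.castSucc + r i.succ = p ^ e i)
    (hc : ∀ i, c i + 2 * r i.succ = p ^ e i) :
    HasJordanType ((jordanBlock F (r 0) ⊗ₖ jordanBlock F (r 0)).mulVecLin - 1 : End F _)
      (fun x : (i : Fin k) × Fin (c i) => p ^ e x.1) := by
  refine hasJordanType_of_finrank_ker_pow (isNilpotent_kronecker_sub_one p _ _) fun m => ?_
  rw [finrank_ker_kronecker_sub_one_pow,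
    isShiftPair_shiftX_shiftY.finrank_circKer_alternating p he hlast hr hc, Fintype.sum_sigma]
  simp only [Finset.sum_const, Finset.card_univ, Fintype.card_fin, smul_eq_mul]

theorem hasJordanType_kronecker_altPowSum (he : StrictAnti e) {r : ℕ}
    (hexp : (r : ℤ) = altPowSum p e 0) :
    HasJordanType ((jordanBlock F r ⊗ₖ jordanBlock F r).mulVecLin - 1 : End F _)
      (fun x : (i : Fin k) × Fin ((p ^ e i - 2 * altPowSum p e (i + 1)).toNat) => p ^ e x.1) := by
  have hp : (2 : ℤ) ≤ p := mod_cast (Fact.out : p.Prime).two_le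
  let s : Fin (k + 1) → ℕ := fun j => (altPowSum p e j).toNat
  have h_cast (j : Fin (k + 1)) : (s j : ℤ) = altPowSum p e j :=
    Int.toNat_of_nonneg (altPowSum_nonneg hp he (Nat.le_of_lt_succ j.2))
  have h_count (i : Fin k) := two_mul_altPowSum_succ_le hp he i
  obtain rfl : s 0 = r := by zify; rw [h_cast, hexp]; rfl
  refine hasJordanType_kronecker_self he.antitone ?_ (fun i => ?_) fun i => ?_ <;> zify
  · rw [h_cast]
    exact altPowSum_of_le le_rfl
  · rw [h_cast, h_cast]
    exact altPowSum_add_succ i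
  · rw [h_cast, Int.toNat_of_nonneg (sub_nonneg.2 (h_count i)), Fin.val_succ, sub_add_cancel]

end TensorSquare

theorem stmt_18_general {F : Type*} [Field F] {p : ℕ} [Fact p.Prime] [CharP F p] {r k : ℕ}
    {e : Fin k → ℕ} (he : StrictAnti e) (hexp : (r : ℤ) = altPowSum p e 0) :
    (∀ i : Fin k, 0 ≤ p ^ e i - 2 * altPowSum p e (i + 1)) ∧
    MatSimilar F (jordanBlock F r ⊗ₖ jordanBlock F r)
      (jordanBlockDiag F
        fun x : (i : Fin k) × Fin ((p ^ e i - 2 * altPowSum p e (i + 1)).toNat) => p ^ e x.1) ∧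
    ∀ {ι : Type} [Fintype ι] [DecidableEq ι] (d : ι → ℕ), (∀ i, 0 < d i) →
      MatSimilar F (jordanBlock F r ⊗ₖ jordanBlock F r) (jordanBlockDiag F d) →
      ∀ i, ∃ m : ℕ, d i = p ^ m := by
  have hp : (2 : ℤ) ≤ p := mod_cast (Fact.out : p.Prime).two_le
  have h_type := hasJordanType_kronecker_altPowSum (F := F) he hexp
  refine ⟨fun i => sub_nonneg.2 (two_mul_altPowSum_succ_le hp he i),
    matSimilar_jordanBlockDiag_iff.2 h_type, fun d hd h_sim i => ?_⟩
  obtain ⟨x, hx⟩ := (matSimilar_jordanBlockDiag_iff.1 h_sim).exists_size_eq h_type (hd i).ne'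
  exact ⟨e x.1, hx.symm⟩

/-- In characteristic 2, if `r = Σ (−1)^{i−1} 2^{e_i}` is the consecutive-ones binary
expansion of `r`, then `J_r ⊗ J_r` decomposes into `2^{e_i} − 2 r_i` blocks `J_{2^{e_i}}`
for each `i`; in particular every block size in the Jordan form of `J_r ⊗ J_r` is a
power of 2. -/
theorem stmt_18 {F : Type*} [Field F] [CharP F 2]
    (r : ℕ) (hr : 0 < r)
    (k : ℕ) (e : Fin k → ℕ) (he : StrictAnti e)
    (hgap : ∀ hk : 2 ≤ k, e ⟨k - 1, by omega⟩ + 1 < e ⟨k - 2, by omega⟩)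
    (hexp : (r : ℤ) = coPartial k e 0) :
    (∀ i : Fin k, 0 ≤ 2 ^ (e i) - 2 * coPartial k e ((i : ℕ) + 1)) ∧
    MatSimilar F (jordanBlock F r ⊗ₖ jordanBlock F r)
      (jordanBlockDiag F
        (fun x : (i : Fin k) ×
            Fin ((2 ^ (e i) - 2 * coPartial k e ((i : ℕ) + 1)).toNat) =>
          2 ^ (e x.1))) ∧
    (∀ (b : ℕ) (lam : Fin b → ℕ), Antitone lam → (∀ i, 0 < lam i) →
      MatSimilar F (jordanBlock F r ⊗ₖ jordanBlock F r) (jordanBlockDiag F lam) →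
      ∀ i, ∃ m : ℕ, lam i = 2 ^ m) := by
  obtain ⟨h_nonneg, h_sim, h_sizes⟩ := stmt_18_general (F := F) (p := 2) he hexp
  exact ⟨h_nonneg, h_sim, fun _ lam _ => h_sizes lam⟩
end
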